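/- arXiv:1201.2861 — 3 statements merged into one kernel-verified Lean document; each statement's English description precedes it below -/
import Mathlib

section
/- Let g∈𝒮 satisfy |g'(x)·(x−c_g)| ≤ |g'(x'_g)·(x'_g−c_g)| for every x∈(c_g,1]. Then for every ν>1 such that the map ν·g sends [0,1] into itself, I_{ν·g} ⊇ I_g. -/
open Set Function

/-- The function χ_g: 1/2 where (g(x)−x)(g(g(x))−g(x)) ≤ 0, and 0 otherwise. -/
noncomputable def chi (g : ℝ → ℝ) (x : ℝ) : ℝ :=
  if (g x - x) * (g (g x) - g x) ≤ 0 then 1 / 2 else 0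

/-- Over-rotation number of a periodic point `y` of `g`. -/
noncomputable def overRotNum (g : ℝ → ℝ) (y : ℝ) : ℝ :=
  (∑ i ∈ Finset.range (Function.minimalPeriod g y), chi g (g^[i] y)) /
    (Function.minimalPeriod g y : ℝ)

/-- The over-rotation interval of `g` on the domain `s`: the closure of the set of
over-rotation numbers of periodic non-fixed points of `g` in `s`. -/
def overRotInterval (g : ℝ → ℝ) (s : Set ℝ) : Set ℝ :=
  closure { r : ℝ | ∃ y ∈ s, y ∈ Function.periodicPts g ∧ g y ≠ y ∧ overRotNum g y = r }

/-- `f` is piecewise monotone on `[a,b]`. -/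
def PiecewiseMonotoneOn (f : ℝ → ℝ) (a b : ℝ) : Prop :=
  ∃ n : ℕ, ∃ t : Fin (n + 1) → ℝ, StrictMono t ∧ t 0 = a ∧ t (Fin.last n) = b ∧
    ∀ i : Fin n, MonotoneOn f (Set.Icc (t i.castSucc) (t i.succ)) ∨
      AntitoneOn f (Set.Icc (t i.castSucc) (t i.succ))


/-- The class 𝒮: concave maps of `[0,1]` into itself with `f(0)=f(1)=0`, a unique turning
point `c ∈ (0,1)` which is a maximum with `f(c) > c`, and `C¹` on `[0,c]` and on `[c,1]`. -/
structure SClass (f : ℝ → ℝ) (c : ℝ) : Prop where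
  maps : Set.MapsTo f (Set.Icc 0 1) (Set.Icc 0 1)
  f0 : f 0 = 0
  f1 : f 1 = 0
  hc : c ∈ Set.Ioo (0:ℝ) 1
  concave : ConcaveOn ℝ (Set.Icc 0 1) f
  mono : StrictMonoOn f (Set.Icc 0 c)
  anti : StrictAntiOn f (Set.Icc c 1)
  fcgt : c < f c
  smoothL : ContDiffOn ℝ 1 f (Set.Icc 0 c)
  smoothR : ContDiffOn ℝ 1 f (Set.Icc c 1)

/-- Secant slopes of a concave function decrease as both end points move to the right. -/
lemma ConcaveOn.secant_le_secant {s : Set ℝ} {f : ℝ → ℝ} (hf : ConcaveOn ℝ s f)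
    {x₁ y₁ x₂ y₂ : ℝ} (hx₁ : x₁ ∈ s) (hy₁ : y₁ ∈ s) (hx₂ : x₂ ∈ s) (hy₂ : y₂ ∈ s)
    (h₁ : x₁ < y₁) (h₂ : x₂ < y₂) (hx : x₁ ≤ x₂) (hy : y₁ ≤ y₂) :
    (f y₂ - f x₂) / (y₂ - x₂) ≤ (f y₁ - f x₁) / (y₁ - x₁) := by
  have h₃ := hf.neg.secant_mono hx₁ hy₁ hy₂ h₁.ne' (by linarith : x₁ < y₂).ne' hy
  have h₄ := hf.neg.secant_mono hy₂ hx₁ hx₂ (by linarith : x₁ < y₂).ne h₂.ne hx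
  simp only [Pi.neg_apply] at h₃ h₄
  have e₁ : (f y₂ - f x₂) / (y₂ - x₂) = -((-f x₂ - -f y₂) / (x₂ - y₂)) := by
    rw [← neg_div_neg_eq, ← neg_div]; congr 1 <;> ring
  have e₂ : (f y₁ - f x₁) / (y₁ - x₁) = -((-f y₁ - -f x₁) / (y₁ - x₁)) := by
    rw [← neg_div]; congr 1; ring
  have e₃ : (-f y₂ - -f x₁) / (y₂ - x₁) = (-f x₁ - -f y₂) / (x₁ - y₂) := by
    rw [← neg_div_neg_eq]; congr 1 <;> ring
  linarith

/-- The over-rotation number can be computed over any period. -/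
lemma overRotNum_eq_of_iterate_eq {f : ℝ → ℝ} {y : ℝ} {q : ℕ} (hq : 0 < q) (hy : f^[q] y = y) :
    overRotNum f y = (∑ i ∈ Finset.range q, chi f (f^[i] y)) / (q : ℝ) := by
  obtain ⟨k, rfl⟩ : minimalPeriod f y ∣ q := IsPeriodicPt.minimalPeriod_dvd hy
  set m := minimalPeriod f y with hm
  have hm0 : 0 < m := Nat.pos_of_mul_pos_right hq
  have hk0 : 0 < k := Nat.pos_of_mul_pos_left hq
  have hsum : ∀ n : ℕ, ∑ i ∈ Finset.range (m * n), chi f (f^[i] y)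
      = n * ∑ i ∈ Finset.range m, chi f (f^[i] y) := by
    intro n
    induction n with
    | zero => simp
    | succ n ih =>
      rw [Nat.mul_succ, Finset.sum_range_add, ih]
      have : ∀ i, f^[m * n + i] y = f^[i] y := by
        intro i
        rw [Nat.add_comm, iterate_add_apply]
        congr 1
        exact ((isPeriodicPt_minimalPeriod f y).mul_const n)
      simp only [this]
      push_cast
      ring
  rw [overRotNum, hsum, ← hm]
  have : (m : ℝ) ≠ 0 := by positivity
  have : (k : ℝ) ≠ 0 := by positivity
  push_cast
  field_simp

/-- An injective continuous function on a compact set has a continuous inverse on its image. -/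
lemma IsCompact.continuousOn_invFunOn {f : ℝ → ℝ} {s : Set ℝ} (hs : IsCompact s)
    (hf : ContinuousOn f s) (hinj : InjOn f s) : ContinuousOn (invFunOn f s) (f '' s) := by
  rw [continuousOn_iff_isClosed]
  intro t ht
  refine ⟨f '' (s ∩ t), ((hs.inter_right ht).image_of_continuousOn
    (hf.mono inter_subset_left)).isClosed, ?_⟩
  ext z
  constructor
  · rintro ⟨hz, hzs⟩
    exact ⟨⟨_, ⟨invFunOn_mem hzs, hz⟩, invFunOn_eq hzs⟩, hzs⟩
  · rintro ⟨⟨x, ⟨hxs, hxt⟩, rfl⟩, hzs⟩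
    refine ⟨?_, hzs⟩
    have : invFunOn f s (f x) = x := hinj (invFunOn_mem hzs) hxs (invFunOn_eq hzs)
    simpa [this] using hxt

/-- A closed loop of compact intervals, each of which covers the next one, is followed by a
periodic point. -/
lemma exists_iterate_eq_of_loop {f : ℝ → ℝ} {lo hi : ℕ → ℝ} {q : ℕ}
    (hle : lo 0 ≤ hi 0) (hcont : ∀ i, ContinuousOn f (Icc (lo i) (hi i)))
    (hinj : ∀ i, InjOn f (Icc (lo i) (hi i)))
    (hcov : ∀ i, Icc (lo (i + 1)) (hi (i + 1)) ⊆ f '' Icc (lo i) (hi i))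
    (hlo : lo q = lo 0) (hhi : hi q = hi 0) :
    ∃ y, f^[q] y = y ∧ ∀ i ≤ q, f^[i] y ∈ Icc (lo i) (hi i) := by
  have key : ∀ n, ∃ σ : ℝ → ℝ, ContinuousOn σ (Icc (lo n) (hi n)) ∧
      ∀ z ∈ Icc (lo n) (hi n), f^[n] (σ z) = z ∧ ∀ i ≤ n, f^[i] (σ z) ∈ Icc (lo i) (hi i) := by
    intro n
    induction n with
    | zero =>
      refine ⟨id, continuousOn_id, fun z hz => ⟨rfl, fun i hi => ?_⟩⟩
      obtain rfl := Nat.le_zero.1 hi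
      exact hz
    | succ n ih =>
      obtain ⟨σ, hσ, h⟩ := ih
      have hτ := (isCompact_Icc.continuousOn_invFunOn (hcont n) (hinj n)).mono (hcov n)
      set τ := invFunOn f (Icc (lo n) (hi n))
      have hτm : MapsTo τ (Icc (lo (n + 1)) (hi (n + 1))) (Icc (lo n) (hi n)) :=
        fun z hz => invFunOn_mem (hcov n hz)
      refine ⟨σ ∘ τ, hσ.comp hτ hτm, fun z hz => ?_⟩
      have hlast : f^[n + 1] ((σ ∘ τ) z) = z := by
        rw [iterate_succ_apply', comp_apply, (h _ (hτm hz)).1]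
        exact invFunOn_eq (hcov n hz)
      refine ⟨hlast, fun i hi => ?_⟩
      rcases Nat.lt_or_ge i (n + 1) with hi' | hi'
      · exact (h _ (hτm hz)).2 i (by omega)
      · obtain rfl : i = n + 1 := le_antisymm hi hi'
        rw [hlast]
        exact hz
  obtain ⟨σ, hσ, h⟩ := key q
  rw [hlo, hhi] at hσ h
  obtain ⟨y, hy, hfix⟩ := exists_mem_Icc_isFixedPt_of_mapsTo hσ hle
    (fun z hz => (h z hz).2 0 (Nat.zero_le q))
  have hfix : σ y = y := hfix
  have := h y hy
  rw [hfix] at this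
  exact ⟨y, this⟩

namespace SClass

variable {g : ℝ → ℝ} {c : ℝ}

lemma continuousOn (hg : SClass g c) : ContinuousOn g (Icc 0 1) := by
  rw [← Icc_union_Icc_eq_Icc hg.hc.1.le hg.hc.2.le]
  exact hg.smoothL.continuousOn.union_of_isClosed hg.smoothR.continuousOn isClosed_Icc isClosed_Icc

lemma const_mul (hg : SClass g c) {ν : ℝ} (hν : 1 < ν)
    (hmaps : MapsTo (fun x => ν * g x) (Icc 0 1) (Icc 0 1)) : SClass (fun x => ν * g x) c where
  maps := hmaps
  f0 := by simp [hg.f0]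
  f1 := by simp [hg.f1]
  hc := hg.hc
  concave := hg.concave.smul (by linarith : (0 : ℝ) ≤ ν)
  mono := fun x hx y hy h => mul_lt_mul_of_pos_left (hg.mono hx hy h) (by linarith)
  anti := fun x hx y hy h => mul_lt_mul_of_pos_left (hg.anti hx hy h) (by linarith)
  fcgt := by
    have := hg.fcgt
    have := hg.hc.1
    nlinarith
  smoothL := contDiffOn_const.mul hg.smoothL
  smoothR := contDiffOn_const.mul hg.smoothR

lemma le_apply_turning (hg : SClass g c) {x : ℝ} (hx : x ∈ Icc (0 : ℝ) 1) : g x ≤ g c := by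
  have h0 := hg.hc.1
  have h1 := hg.hc.2
  rcases le_total x c with h | h
  · exact hg.mono.monotoneOn ⟨hx.1, h⟩ ⟨h0.le, le_rfl⟩ h
  · exact hg.anti.antitoneOn ⟨le_rfl, h1.le⟩ ⟨h, hx.2⟩ h

lemma exists_fixed (hg : SClass g c) : ∃ a ∈ Ioo c 1, g a = a := by
  have h1 := hg.hc.2
  have hc : ContinuousOn (fun x => g x - x) (Icc c 1) :=
    (hg.smoothR.continuousOn).sub continuousOn_id
  have := intermediate_value_Ioo' h1.le hc
  obtain ⟨a, ha, h⟩ := this (⟨by simp [hg.f1], by linarith [hg.fcgt]⟩ :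
    (0 : ℝ) ∈ Ioo (g 1 - 1) (g c - c))
  exact ⟨a, ha, by simpa [sub_eq_zero] using h⟩

lemma lt_apply (hg : SClass g c) {a : ℝ} (ha : a ∈ Ioo c 1) (hfa : g a = a) {x : ℝ}
    (h0 : 0 < x) (hx : x < a) : x < g x := by
  have hc0 := hg.hc.1
  rcases lt_or_ge x c with h | h
  · have := hg.concave.secant_le_secant (x₁ := 0) (y₁ := x) (x₂ := 0) (y₂ := c)
      (by simp) ⟨h0.le, by linarith [hg.hc.2]⟩ (by simp) ⟨hc0.le, hg.hc.2.le⟩ h0 hc0 le_rfl h.le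
    simp only [hg.f0, sub_zero] at this
    have h1 : 1 < g c / c := by rw [lt_div_iff₀ hc0]; linarith [hg.fcgt]
    have h2 : 1 < g x / x := by linarith
    rw [lt_div_iff₀ h0] at h2
    linarith
  · have := hg.anti ⟨h, by linarith [ha.2]⟩ ⟨ha.1.le, ha.2.le⟩ hx
    linarith

lemma fixed_lt_apply (hg : SClass g c) {a : ℝ} (ha : a ∈ Ioo c 1) (hfa : g a = a) {x : ℝ}
    (h0 : c ≤ x) (hx : x < a) : a < g x := by
  have := hg.anti ⟨h0, by linarith [ha.2]⟩ ⟨ha.1.le, ha.2.le⟩ hx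
  linarith

lemma apply_lt_fixed (hg : SClass g c) {a : ℝ} (ha : a ∈ Ioo c 1) (hfa : g a = a) {x : ℝ}
    (hx : a < x) (h1 : x ≤ 1) : g x < a := by
  have := hg.anti ⟨ha.1.le, ha.2.le⟩ ⟨by linarith [ha.1], h1⟩ hx
  linarith

lemma exists_left_preimage (hg : SClass g c) {x : ℝ} (hx : x ∈ Icc (0 : ℝ) 1) :
    ∃ x' ∈ Icc 0 c, g x' = g x := by
  have := intermediate_value_Icc hg.hc.1.le hg.smoothL.continuousOn
  exact this ⟨by rw [hg.f0]; exact (hg.maps hx).1, hg.le_apply_turning hx⟩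

/-- The ratio of the distances to the turning point of the two preimages of a value decreases
as they move away from the turning point. -/
lemma ratio_le (hg : SClass g c)
    (hcond : ∀ x ∈ Ioc c 1, ∀ x' ∈ Icc (0 : ℝ) c, g x' = g x →
      |derivWithin g (Icc c 1) x * (x - c)| ≤ |derivWithin g (Icc 0 c) x' * (x' - c)|)
    {a b a' b' : ℝ} (hca : c < a) (hab : a ≤ b) (hb : b < 1) (ha' : a' ∈ Icc 0 c)
    (hb' : b' ∈ Icc 0 c) (hga : g a' = g a) (hgb : g b' = g b) :
    (c - b') * (a - c) ≤ (c - a') * (b - c) := by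
  have hc0 := hg.hc.1
  have hc1 := hg.hc.2
  set ψ := invFunOn g (Icc 0 c) with hψ
  have himg : g '' Ioo 0 c = Ioo 0 (g c) := by
    apply Subset.antisymm
    · rintro _ ⟨x, hx, rfl⟩
      refine ⟨?_, hg.mono ⟨hx.1.le, hx.2.le⟩ ⟨hc0.le, le_rfl⟩ hx.2⟩
      have := hg.mono ⟨le_rfl, hc0.le⟩ ⟨hx.1.le, hx.2.le⟩ hx.1
      rwa [hg.f0] at this
    · have := intermediate_value_Ioo hc0.le hg.smoothL.continuousOn
      rwa [hg.f0] at this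
  have hψg : ∀ x ∈ Icc 0 c, ψ (g x) = x := fun x hx =>
    hg.mono.injOn.leftInvOn_invFunOn hx
  have hgψ : ∀ y ∈ Ioo 0 (g c), ψ y ∈ Ioo 0 c ∧ g (ψ y) = y := by
    intro y hy
    rw [← himg] at hy
    obtain ⟨x, hx, rfl⟩ := hy
    rw [hψg x ⟨hx.1.le, hx.2.le⟩]
    exact ⟨hx, rfl⟩
  have hψmono : MonotoneOn ψ (Ioo 0 (g c)) := by
    intro y hy z hz hyz
    have h1 := hgψ y hy
    have h2 := hgψ z hz
    by_contra! h
    have := hg.mono ⟨h2.1.1.le, h2.1.2.le⟩ ⟨h1.1.1.le, h1.1.2.le⟩ h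
    linarith
  have hψimg : ψ '' Ioo 0 (g c) = Ioo 0 c := by
    apply Subset.antisymm
    · rintro _ ⟨y, hy, rfl⟩
      exact (hgψ y hy).1
    · intro x hx
      exact ⟨g x, himg ▸ mem_image_of_mem g hx, hψg x ⟨hx.1.le, hx.2.le⟩⟩
  have hψd : ∀ y ∈ Ioo 0 (g c), 0 < derivWithin g (Icc 0 c) (ψ y) ∧
      HasDerivAt ψ (derivWithin g (Icc 0 c) (ψ y))⁻¹ y := by
    intro y hy
    have h1 := (hgψ y hy).1
    have hd := (hg.smoothL.differentiableOn one_ne_zero (ψ y) ⟨h1.1.le, h1.2.le⟩).hasDerivWithinAt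
    have hpos : 0 < derivWithin g (Icc 0 c) (ψ y) := by
      have hconc : ConcaveOn ℝ (Icc 0 c) g :=
        hg.concave.subset (Icc_subset_Icc le_rfl hc1.le) (convex_Icc _ _)
      have := hconc.slope_le_of_hasDerivWithinAt ⟨h1.1.le, h1.2.le⟩ ⟨hc0.le, le_rfl⟩ h1.2 hd
      refine lt_of_lt_of_le ?_ this
      rw [slope_def_field]
      have := hg.mono ⟨h1.1.le, h1.2.le⟩ ⟨hc0.le, le_rfl⟩ h1.2
      exact div_pos (by linarith) (by linarith [h1.2])
    refine ⟨hpos, HasDerivAt.of_local_left_inverse ?_ (hd.hasDerivAt (Icc_mem_nhds h1.1 h1.2))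
      hpos.ne' ?_⟩
    · refine continuousAt_of_monotoneOn_of_image_mem_nhds hψmono (Ioo_mem_nhds hy.1 hy.2) ?_
      rw [hψimg]
      exact Ioo_mem_nhds h1.1 h1.2
    · filter_upwards [Ioo_mem_nhds hy.1 hy.2] with z hz using (hgψ z hz).2
  have hgmem : ∀ x ∈ Icc a b, g x ∈ Ioo 0 (g c) := by
    intro x hx
    constructor
    · have := hg.anti ⟨by linarith [hx.1], by linarith [hx.2]⟩ ⟨hc1.le, le_rfl⟩
        (by linarith [hx.2] : x < 1)
      rwa [hg.f1] at this
    · exact hg.anti ⟨le_rfl, hc1.le⟩ ⟨by linarith [hx.1], by linarith [hx.2]⟩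
        (by linarith [hx.1])
  have hderiv : ∀ x ∈ Icc a b, HasDerivAt (fun x => (c - ψ (g x)) / (x - c))
      (((-((derivWithin g (Icc 0 c) (ψ (g x)))⁻¹ * derivWithin g (Icc c 1) x)) * (x - c)
        - (c - ψ (g x)) * 1) / (x - c) ^ 2) x := by
    intro x hx
    have hxc : c < x := by linarith [hx.1]
    have hx1 : x < 1 := by linarith [hx.2]
    have hd := ((hg.smoothR.differentiableOn one_ne_zero x
      ⟨hxc.le, hx1.le⟩).hasDerivWithinAt).hasDerivAt (Icc_mem_nhds hxc hx1)
    have h2 := ((hψd _ (hgmem x hx)).2.comp x hd).const_sub c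
    exact h2.div ((hasDerivAt_id x).sub_const c) (sub_pos.2 hxc).ne'
  have hanti : AntitoneOn (fun x => (c - ψ (g x)) / (x - c)) (Icc a b) := by
    refine antitoneOn_of_hasDerivWithinAt_nonpos (convex_Icc a b)
      (fun x hx => (hderiv x hx).continuousAt.continuousWithinAt)
      (fun x hx => (hderiv x (interior_subset hx)).hasDerivWithinAt) ?_
    intro x hx
    replace hx := interior_subset hx
    have hxc : c < x := by linarith [hx.1]
    have hx1 : x < 1 := by linarith [hx.2]
    refine div_nonpos_of_nonpos_of_nonneg ?_ (sq_nonneg _)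
    obtain ⟨hm, he⟩ := hgψ _ (hgmem x hx)
    have hpos := (hψd _ (hgmem x hx)).1
    have h := hcond x ⟨hxc, hx1.le⟩ _ ⟨hm.1.le, hm.2.le⟩ he
    set p := derivWithin g (Icc 0 c) (ψ (g x))
    set r := derivWithin g (Icc c 1) x
    have h3 : |p * (ψ (g x) - c)| = p * (c - ψ (g x)) := by
      rw [abs_mul, abs_of_pos hpos, abs_sub_comm, abs_of_pos (by linarith [hm.2])]
    rw [h3] at h
    have h4 : -(r * (x - c)) ≤ p * (c - ψ (g x)) := (neg_le_abs _).trans h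
    have h5 : p⁻¹ * (-(r * (x - c))) ≤ c - ψ (g x) := by
      rw [inv_mul_le_iff₀ hpos]
      exact h4
    nlinarith
  have := hanti ⟨le_rfl, hab⟩ ⟨hab, le_rfl⟩ hab
  simp only [← hga, ← hgb, hψg _ ha', hψg _ hb'] at this
  rwa [div_le_div_iff₀ (by linarith) (by linarith)] at this

/-- There is an increasing map `h` matching the turning points and the fixed points of `g` and
`f = ν * g` which, up to clamping to `[0,1]`, makes `f` lie below `g` on the part of the left lap
that stays left of the fixed point, above `g` between the turning point and the fixed point, and
below `g` to the right of the fixed point. -/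
lemma exists_comparison (hg : SClass g c)
    (hcond : ∀ x ∈ Ioc c 1, ∀ x' ∈ Icc (0 : ℝ) c, g x' = g x →
      |derivWithin g (Icc c 1) x * (x - c)| ≤ |derivWithin g (Icc 0 c) x' * (x' - c)|)
    {ν : ℝ} (hν : 1 < ν) {f : ℝ → ℝ} (hf : f = fun x => ν * g x) (hfS : SClass f c) {a b b' : ℝ}
    (ha : a ∈ Ioo c 1) (hga : g a = a) (hb : b ∈ Ioo c 1) (hfb : f b = b)
    (hb' : b' ∈ Icc 0 c) (hfb' : f b' = b) :
    ∃ h : ℝ → ℝ, StrictMono h ∧ h a = b ∧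
      (∀ x ∈ Icc 0 c, g x ≤ a → max 0 (h x) ≤ b' ∧ f (max 0 (h x)) ≤ max 0 (h (g x))) ∧
      (∀ x ∈ Icc 0 a, min 1 (h (g x)) ≤ f (max c (h x))) ∧
      ∀ x ∈ Icc a 1, f (min 1 (h x)) ≤ max 0 (h (g x)) := by
  have hc0 := hg.hc.1
  have hc1 := hg.hc.2
  have hfx : ∀ x, f x = ν * g x := fun x => by rw [hf]
  have hab : a < b := by
    by_contra! hba
    have h1 := hg.anti.antitoneOn ⟨hb.1.le, by linarith [hb.2]⟩ ⟨ha.1.le, ha.2.le⟩ hba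
    have h2 := hfx b
    nlinarith [hb.1]
  have hca : 0 < a - c := by linarith [ha.1]
  set l := (b - c) / (a - c) with hl
  have hl1 : 1 < l := by rw [hl, lt_div_iff₀ hca]; linarith
  have hl0 : 0 < l := by linarith
  have hla : l * (a - c) = b - c := by rw [hl]; field_simp
  obtain ⟨h, hh⟩ : ∃ h : ℝ → ℝ, ∀ x, h x = c + l * (x - c) := ⟨_, fun _ => rfl⟩
  have hmono : StrictMono h := by
    intro x y hxy
    rw [hh, hh]
    nlinarith
  have hha : h a = b := by rw [hh]; linarith
  have hhc : h c = c := by rw [hh]; ring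
  have hlin : ∀ x y, h y - h x = l * (y - x) := by intro x y; rw [hh, hh]; ring
  have hle : ∀ x ≤ c, h x ≤ x := by intro x hx; rw [hh]; nlinarith
  have hge : ∀ x, c ≤ x → x ≤ h x := by intro x hx; rw [hh]; nlinarith
  have hleft : ∀ x y, x ≤ y → y ≤ c → 0 ≤ h x → l * (g y - g x) ≤ f (h y) - f (h x) := by
    intro x y hxy hy hx0
    rcases hxy.eq_or_lt with rfl | hlt
    · simp
    have hx1 := hle x (hxy.trans hy)
    have hy1 := hle y hy
    have hhlt := hmono hlt
    have := hg.concave.secant_le_secant (x₁ := h x) (y₁ := h y) (x₂ := x) (y₂ := y)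
      ⟨hx0, by linarith⟩ ⟨by linarith, by linarith⟩ ⟨by linarith, by linarith⟩
      ⟨by linarith, by linarith⟩ hhlt hlt hx1 hy1
    rw [hlin, div_le_div_iff₀ (by linarith) (by nlinarith)] at this
    have hpos := hg.mono ⟨hx0.trans hx1, by linarith⟩ ⟨by linarith, hy⟩ hlt
    have h1 : l * (g y - g x) ≤ g (h y) - g (h x) := by
      have h2 : (l * (g y - g x)) * (y - x) ≤ (g (h y) - g (h x)) * (y - x) := by linarith
      exact le_of_mul_le_mul_right h2 (by linarith)
    rw [hfx, hfx]
    have : 0 < l * (g y - g x) := mul_pos hl0 (by linarith)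
    nlinarith
  have hright : ∀ x y, x ≤ y → c ≤ x → h y ≤ 1 → f (h y) - f (h x) ≤ l * (g y - g x) := by
    intro x y hxy hx hy0
    rcases hxy.eq_or_lt with rfl | hlt
    · simp
    have hx1 := hge x hx
    have hy1 := hge y (hx.trans hxy)
    have hhlt := hmono hlt
    have := hg.concave.secant_le_secant (x₂ := h x) (y₂ := h y) (x₁ := x) (y₁ := y)
      ⟨by linarith, by linarith⟩ ⟨by linarith, by linarith⟩ ⟨by linarith, by linarith⟩
      ⟨by linarith, by linarith⟩ hlt hhlt hx1 hy1
    rw [hlin, div_le_div_iff₀ (by nlinarith) (by linarith)] at this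
    have hneg := hg.anti ⟨hx, by linarith⟩ ⟨by linarith, by linarith⟩ hlt
    have h1 : g (h y) - g (h x) ≤ l * (g y - g x) := by
      have h2 : (g (h y) - g (h x)) * (y - x) ≤ (l * (g y - g x)) * (y - x) := by linarith
      exact le_of_mul_le_mul_right h2 (by linarith)
    rw [hfx, hfx]
    have : l * (g y - g x) < 0 := mul_neg_of_pos_of_neg hl0 (by linarith)
    nlinarith
  have hB : ∀ x ∈ Icc c a, h (g x) ≤ f (h x) := by
    intro x hx
    have h1 := hright x a hx.2 hx.1 (by linarith [hb.2])
    have h2 := hlin (g x) (g a)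
    rw [hga] at h1 h2
    rw [hha] at h1 h2
    linarith
  obtain ⟨a', ha', hga'⟩ := hg.exists_left_preimage (x := a) ⟨by linarith, ha.2.le⟩
  have hgb' : g b' = g b := by
    have h1 := hfx b
    have h2 := hfx b'
    have : ν * g b' = ν * g b := by linarith
    exact mul_left_cancel₀ (by linarith) this
  have hha' : h a' ≤ b' := by
    have h1 := hg.ratio_le hcond ha.1 hab.le hb.2 ha' hb' hga' hgb'
    have h2 : (c - b') * (a - c) ≤ (l * (c - a')) * (a - c) := by
      have : (l * (c - a')) * (a - c) = (c - a') * (b - c) := by rw [← hla]; ring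
      linarith
    have := le_of_mul_le_mul_right h2 hca
    rw [hh]
    linarith
  refine ⟨h, hmono, hha, ?_, ?_, ?_⟩
  · intro x hx hgx
    have hxa' : x ≤ a' := by
      by_contra! hlt
      have := hg.mono ha' hx hlt
      linarith
    have hxb' : h x ≤ b' := (hmono.monotone hxa').trans hha'
    refine ⟨max_le hb'.1 hxb', ?_⟩
    rcases le_total 0 (h x) with h0 | h0
    · rw [max_eq_right h0]
      refine le_trans ?_ (le_max_right _ _)
      have h1 := hleft x a' hxa' ha'.2 h0
      have h2 := hlin (g x) (g a')
      have h3 := hfS.mono.monotoneOn ⟨h0.trans (hmono.monotone hxa'), hha'.trans hb'.2⟩ hb' hha'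
      rw [hga', hga] at h1 h2
      rw [hha] at h2
      linarith
    · rw [max_eq_left h0, hfS.f0]
      exact le_max_left _ _
  · intro x hx
    rcases le_total x c with hxc | hxc
    · have h1 : h x ≤ c := (hle x hxc).trans hxc
      rw [max_eq_left h1]
      refine (min_le_right _ _).trans ?_
      have h2 := hB c ⟨le_rfl, ha.1.le⟩
      rw [hhc] at h2
      exact (hmono.monotone (hg.le_apply_turning ⟨hx.1, by linarith [ha.2, hx.2]⟩)).trans h2
    · have h1 : c ≤ h x := hxc.trans (hge x hxc)
      rw [max_eq_right h1]
      exact (min_le_right _ _).trans (hB x ⟨hxc, hx.2⟩)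
  · intro x hx
    rcases le_total (h x) 1 with h1 | h1
    · rw [min_eq_right h1]
      refine le_trans ?_ (le_max_right _ _)
      have h2 := hright a x hx.1 ha.1.le h1
      have h3 := hlin (g a) (g x)
      rw [hga] at h2 h3
      rw [hha] at h2 h3
      linarith
    · rw [min_eq_left h1, hfS.f1]
      exact le_max_left _ _

lemma apply_sub_self_pos_iff (hg : SClass g c) {a : ℝ} (ha : a ∈ Ioo c 1) (hga : g a = a) {x : ℝ}
    (h0 : 0 < x) (h1 : x ≤ 1) (hxa : x ≠ a) :
    (x < a ∧ 0 < g x - x) ∨ (a < x ∧ g x - x < 0) := by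
  rcases lt_or_gt_of_ne hxa with h | h
  · exact Or.inl ⟨h, sub_pos.2 (hg.lt_apply ha hga h0 h)⟩
  · exact Or.inr ⟨h, by linarith [hg.apply_lt_fixed ha hga h h1]⟩

/-- Away from the fixed points, `chi` only depends on the sides of the fixed point on which a
point and its image lie. -/
lemma chi_eq (hg : SClass g c) {a : ℝ} (ha : a ∈ Ioo c 1) (hga : g a = a) {x : ℝ}
    (h0 : 0 < x) (h1 : x ≤ 1) (hxa : x ≠ a) (h0' : 0 < g x) (hxa' : g x ≠ a) :
    chi g x = if (x < a ↔ g x < a) then 0 else 1 / 2 := by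
  have h1' := (hg.maps ⟨h0.le, h1⟩).2
  rw [chi]
  rcases hg.apply_sub_self_pos_iff ha hga h0 h1 hxa with ⟨h, hs⟩ | ⟨h, hs⟩ <;>
  rcases hg.apply_sub_self_pos_iff ha hga h0' h1' hxa' with ⟨h', hs'⟩ | ⟨h', hs'⟩
  · rw [if_neg (not_le.2 (mul_pos hs hs')), if_pos (by simp [h, h'])]
  · rw [if_pos (mul_nonpos_of_nonneg_of_nonpos hs.le hs'.le), if_neg (by simp [h, h'.le])]
  · rw [if_pos (mul_nonpos_of_nonpos_of_nonneg hs.le hs'.le), if_neg (by simp [h.le, h'])]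
  · rw [if_neg (not_le.2 (mul_pos_of_neg_of_neg hs hs')), if_pos (by simp [h.not_gt, h'.not_gt])]

/-- The points of a non-fixed periodic orbit lie in `(0,1]` and avoid the fixed point. -/
lemma periodic_mem (hg : SClass g c) {a : ℝ} (hga : g a = a) {y : ℝ} {q : ℕ} (hq0 : 0 < q)
    (hy : y ∈ Icc (0 : ℝ) 1) (hq : g^[q] y = y) (hne : g y ≠ y) (i : ℕ) :
    0 < g^[i] y ∧ g^[i] y ≤ 1 ∧ g^[i] y ≠ a := by
  have hmem : g^[i] y ∈ Icc (0 : ℝ) 1 := hg.maps.iterate i hy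
  have hfix : ∀ z, g z = z → g^[i] y ≠ z := by
    intro z hz hi
    have hn : ∀ n, g^[n + i] y = z := by
      intro n
      rw [iterate_add_apply, hi]
      exact iterate_fixed hz n
    have h1 := hn (q * i - i)
    rw [Nat.sub_add_cancel (Nat.le_mul_of_pos_left i hq0)] at h1
    have h2 : g^[q * i] y = y := IsPeriodicPt.mul_const hq i
    rw [h2] at h1
    exact hne (by rw [h1, hz])
  exact ⟨lt_of_le_of_ne hmem.1 (hfix 0 hg.f0).symm, hmem.2, hfix a hga⟩

end SClass

theorem stmt10 (g : ℝ → ℝ) (c : ℝ) (hg : SClass g c)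
    -- |g'(x)·(x−c_g)| ≤ |g'(x'_g)·(x'_g−c_g)| for every x ∈ (c_g,1]
    (hcond : ∀ x ∈ Set.Ioc c 1, ∀ x' ∈ Set.Icc (0:ℝ) c, g x' = g x →
      |derivWithin g (Set.Icc c 1) x * (x - c)| ≤ |derivWithin g (Set.Icc 0 c) x' * (x' - c)|)
    (ν : ℝ) (hν : 1 < ν)
    (hmaps : Set.MapsTo (fun x => ν * g x) (Set.Icc 0 1) (Set.Icc 0 1)) :
    overRotInterval g (Set.Icc 0 1) ⊆ overRotInterval (fun x => ν * g x) (Set.Icc 0 1) := by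
  have hfS := hg.const_mul hν hmaps
  obtain ⟨f, hf⟩ : ∃ f : ℝ → ℝ, f = fun x => ν * g x := ⟨_, rfl⟩
  rw [← hf] at hfS ⊢
  have hc0 := hg.hc.1
  have hc1 := hg.hc.2
  obtain ⟨a, ha, hga⟩ := hg.exists_fixed
  obtain ⟨b, hb, hfb⟩ := hfS.exists_fixed
  obtain ⟨b', hb', hfb'⟩ := hfS.exists_left_preimage (x := b) ⟨by linarith [hb.1], hb.2.le⟩
  rw [hfb] at hfb'
  obtain ⟨h, hmono, hab, hA, hB, hC⟩ :=
    hg.exists_comparison hcond hν hf hfS ha hga hb hfb hb' hfb'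
  refine closure_mono ?_
  rintro r ⟨y, hy, hper, hne, rfl⟩
  set q := minimalPeriod g y with hq
  have hq0 : 0 < q := minimalPeriod_pos_of_mem_periodicPts hper
  have hqy : g^[q] y = y := iterate_minimalPeriod
  obtain ⟨x, hx⟩ : ∃ x : ℕ → ℝ, ∀ i, x i = g^[i] y := ⟨_, fun _ => rfl⟩
  have hsucc : ∀ i, g (x i) = x (i + 1) := fun i => by rw [hx, hx, iterate_succ_apply']
  have hmod : ∀ i, x (i % q) = x i := fun i => by
    rw [hx, hx, hq, iterate_mod_minimalPeriod_eq]
  have hadd : ∀ i n, x (i + q * n) = x i := fun i n => by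
    rw [← hmod, Nat.add_mul_mod_self_left, hmod]
  have hmem : ∀ i, 0 < x i ∧ x i ≤ 1 ∧ x i ≠ a := fun i => by
    rw [hx]; exact hg.periodic_mem hga hq0 hy hqy hne i
  have hchi : ∀ i, chi g (g^[i] y) = if (x i < a ↔ x (i + 1) < a) then 0 else 1 / 2 := fun i => by
    have h1 := hmem (i + 1)
    rw [← hsucc] at h1
    rw [← hx, ← hsucc]
    exact hg.chi_eq ha hga (hmem i).1 (hmem i).2.1 (hmem i).2.2 h1.1 h1.2.2
  have hright : ∀ i, ¬ x i < a → a < x i := fun i hi =>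
    lt_of_le_of_ne (not_lt.1 hi) (hmem i).2.2.symm
  have hrl : ∀ i, ¬ x i < a → x (i + 1) < a := fun i hi => by
    rw [← hsucc]; exact hg.apply_lt_fixed ha hga (hright i hi) (hmem i).2.1
  have hll : ∀ i, x i < a → x (i + 1) < a → x i < c := fun i hi hi' => by
    by_contra! hci
    have := hg.fixed_lt_apply ha hga hci hi
    rw [hsucc] at this
    linarith
  have hexR : ∃ i, ¬ x i < a := by
    by_contra! hall
    have : StrictMono x := strictMono_nat_of_lt_succ fun i => by
      rw [← hsucc]; exact hg.lt_apply ha hga (hmem i).1 (hall i)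
    have h1 := this hq0
    have h2 := hadd 0 1
    rw [zero_add, mul_one] at h2
    linarith
  have hb'0 : 0 < b' := by
    refine lt_of_le_of_ne hb'.1 ?_
    rintro rfl
    rw [hfS.f0] at hfb'
    linarith [hb.1]
  have hA' : ∀ i, x i < a → x (i + 1) < a →
      max 0 (h (x i)) ≤ b' ∧ f (max 0 (h (x i))) ≤ max 0 (h (x (i + 1))) := fun i hi hi' => by
    rw [← hsucc]
    exact hA _ ⟨(hmem i).1.le, (hll i hi hi').le⟩ (by rw [hsucc]; exact hi'.le)
  have hB' : ∀ i, x i < a → min 1 (h (x (i + 1))) ≤ f (max c (h (x i))) := fun i hi => by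
    rw [← hsucc]; exact hB _ ⟨(hmem i).1.le, hi.le⟩
  have hC' : ∀ i, ¬ x i < a → f (min 1 (h (x i))) ≤ max 0 (h (x (i + 1))) := fun i hi => by
    rw [← hsucc]; exact hC _ ⟨(hright i hi).le, (hmem i).2.1⟩
  have hltb : ∀ i, x i < a → max c (h (x i)) < b := fun i hi =>
    max_lt hb.1 (by rw [← hab]; exact hmono hi)
  have hgeb : ∀ i, ¬ x i < a → b ≤ min 1 (h (x i)) := fun i hi =>
    le_min hb.2.le (by rw [← hab]; exact hmono.monotone (not_lt.1 hi))
  by_cases hAA : ∃ i, x i < a ∧ x (i + 1) < a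
  · obtain ⟨lo, hlo⟩ : ∃ lo : ℕ → ℝ, ∀ i, lo i = if x i < a then
        (if x (i + 1) < a then max 0 (h (x i)) else max c (h (x i))) else b := ⟨_, fun _ => rfl⟩
    obtain ⟨hi, hhi⟩ : ∃ hi : ℕ → ℝ, ∀ i, hi i = if x i < a then
        (if x (i + 1) < a then b' else b) else min 1 (h (x i)) := ⟨_, fun _ => rfl⟩
    have hle : ∀ i, lo i ≤ hi i := by
      intro i
      rw [hlo, hhi]
      split_ifs with h1 h2
      · exact (hA' i h1 h2).1
      · exact (hltb i h1).le
      · exact hgeb i h1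
    have hsub : ∀ i, Icc (lo i) (hi i) ⊆ Icc 0 c ∨ Icc (lo i) (hi i) ⊆ Icc c 1 := by
      intro i
      rw [hlo, hhi]
      split_ifs with h1 h2
      · exact Or.inl (Icc_subset_Icc (le_max_left _ _) hb'.2)
      · exact Or.inr (Icc_subset_Icc (le_max_left _ _) hb.2.le)
      · exact Or.inr (Icc_subset_Icc hb.1.le (min_le_left _ _))
    have hsub01 : ∀ i, Icc (lo i) (hi i) ⊆ Icc 0 1 := fun i =>
      (hsub i).elim (fun h => h.trans (Icc_subset_Icc le_rfl hc1.le))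
        (fun h => h.trans (Icc_subset_Icc hc0.le le_rfl))
    have houtL : ∀ i, x i < a → Icc (lo i) (hi i) ⊆ Icc (max 0 (h (x i))) b := by
      intro i h1
      rw [hlo, hhi, if_pos h1, if_pos h1]
      split_ifs with h2
      · exact Icc_subset_Icc le_rfl (hb'.2.trans hb.1.le)
      · exact Icc_subset_Icc (max_le_max hc0.le le_rfl) le_rfl
    have hoR : ∀ i, ¬ x i < a → Icc (lo i) (hi i) = Icc b (min 1 (h (x i))) := by
      intro i h1
      rw [hlo, hhi, if_neg h1, if_neg h1]
    have hcont : ∀ i, ContinuousOn f (Icc (lo i) (hi i)) := fun i =>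
      hfS.continuousOn.mono (hsub01 i)
    have hcov : ∀ i, Icc (lo (i + 1)) (hi (i + 1)) ⊆ f '' Icc (lo i) (hi i) := by
      intro i
      by_cases h1 : x i < a
      · by_cases h2 : x (i + 1) < a
        · refine (houtL _ h2).trans ?_
          have e1 : lo i = max 0 (h (x i)) := by rw [hlo, if_pos h1, if_pos h2]
          have e2 : hi i = b' := by rw [hhi, if_pos h1, if_pos h2]
          refine Subset.trans ?_ (intermediate_value_Icc (hle i) (hcont i))
          rw [e1, e2, hfb']
          exact Icc_subset_Icc (hA' i h1 h2).2 le_rfl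
        · rw [hoR _ h2]
          have e1 : lo i = max c (h (x i)) := by rw [hlo, if_pos h1, if_neg h2]
          have e2 : hi i = b := by rw [hhi, if_pos h1, if_neg h2]
          refine Subset.trans ?_ (intermediate_value_Icc' (hle i) (hcont i))
          rw [e1, e2, hfb]
          exact Icc_subset_Icc le_rfl (hB' i h1)
      · refine (houtL _ (hrl i h1)).trans ?_
        have e1 : lo i = b := by rw [hlo, if_neg h1]
        have e2 : hi i = min 1 (h (x i)) := by rw [hhi, if_neg h1]
        refine Subset.trans ?_ (intermediate_value_Icc' (hle i) (hcont i))
        rw [e1, e2, hfb]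
        exact Icc_subset_Icc (hC' i h1) le_rfl
    have hinj : ∀ i, InjOn f (Icc (lo i) (hi i)) := fun i =>
      (hsub i).elim (fun h => hfS.mono.injOn.mono h) (fun h => hfS.anti.injOn.mono h)
    have hmodlo : ∀ i, lo (i % q) = lo i := fun i => by
      rw [hlo, hlo, ← hsucc, ← hsucc, hmod]
    have hmodhi : ∀ i, hi (i % q) = hi i := fun i => by
      rw [hhi, hhi, ← hsucc, ← hsucc, hmod]
    obtain ⟨w, hwq, hw⟩ := exists_iterate_eq_of_loop (q := q) (hle 0) hcont hinj hcov
      (by rw [← hmodlo, Nat.mod_self]) (by rw [← hmodhi, Nat.mod_self])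
    have hwall : ∀ i, f^[i] w ∈ Icc (lo i) (hi i) := by
      intro i
      have h1 := hw (i % q) (Nat.mod_lt i hq0).le
      rw [hmodlo, hmodhi] at h1
      have h2 : f^[i % q] w = f^[i] w := IsPeriodicPt.iterate_mod_apply hwq i
      rwa [h2] at h1
    have hwmem : w ∈ Icc (0 : ℝ) 1 := hsub01 0 (hwall 0)
    have hwne : f w ≠ w := by
      intro hfw
      obtain ⟨i, hi1, hi2⟩ := hAA
      obtain ⟨j, hj⟩ := hexR
      have h1 := hwall i
      have h2 := hwall j
      rw [hoR j hj, iterate_fixed hfw] at h2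
      rw [hhi, if_pos hi1, if_pos hi2, iterate_fixed hfw] at h1
      linarith [h1.2, h2.1, hb'.2, hb.1]
    have hwpos := hfS.periodic_mem hfb hq0 hwmem hwq hwne
    have hside : ∀ i, f^[i] w < b ↔ x i < a := by
      intro i
      by_cases h1 : x i < a
      · have h2 := (houtL i h1 (hwall i)).2
        exact iff_of_true (lt_of_le_of_ne h2 (hwpos i).2.2) h1
      · have h2 := hwall i
        rw [hoR i h1] at h2
        exact iff_of_false (not_lt.2 h2.1) h1
    refine ⟨w, hwmem, mk_mem_periodicPts hq0 hwq, hwne, ?_⟩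
    rw [overRotNum_eq_of_iterate_eq hq0 hwq, overRotNum_eq_of_iterate_eq hq0 hqy]
    congr 1
    refine Finset.sum_congr rfl fun i _ => ?_
    have h1 := hwpos (i + 1)
    have h2 := hside (i + 1)
    rw [iterate_succ_apply'] at h1 h2
    rw [hchi, hfS.chi_eq hb hfb (hwpos i).1 (hwpos i).2.1 (hwpos i).2.2 h1.1 h1.2.2]
    simp only [h2, hside]
  · push Not at hAA
    have hlr : ∀ i, x i < a → ¬ x (i + 1) < a := fun i hi => not_lt.2 (hAA i hi)
    have hg2 : overRotNum g y = 1 / 2 := by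
      have h1 : ∀ i, chi g (g^[i] y) = 1 / 2 := fun i => by
        rw [hchi, if_neg]
        intro hiff
        by_cases h : x i < a
        · exact hlr i h (hiff.1 h)
        · exact h (hiff.2 (hrl i h))
      have : (q : ℝ) ≠ 0 := by positivity
      rw [overRotNum_eq_of_iterate_eq hq0 hqy]
      simp only [h1, Finset.sum_const, Finset.card_range, nsmul_eq_mul]
      field_simp
    obtain ⟨i, hi1, hi2⟩ : ∃ i, x i < a ∧ x (i + 2) ≤ x i := by
      by_contra! hall
      obtain ⟨k, hk⟩ := hexR
      have hL : ∀ n, x (k + 1 + 2 * n) < a := by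
        intro n
        induction n with
        | zero => exact hrl k hk
        | succ n ih => exact hrl _ (hlr _ ih)
      have hsm : StrictMono fun n => x (k + 1 + 2 * n) :=
        strictMono_nat_of_lt_succ fun n => hall _ (hL n)
      have h1 := hsm hq0
      have h2 := hadd (k + 1) 2
      simp only [mul_zero, add_zero, mul_comm 2 q] at h1
      linarith
    set z := max c (h (x i)) with hz
    have hzb : z < b := hltb i hi1
    have hcz : c ≤ z := le_max_left _ _
    have hb1 := hb.2
    have hbm := hgeb _ (hlr i hi1)
    have hm1 : min 1 (h (x (i + 1))) ≤ 1 := min_le_left _ _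
    have hffz : f (f z) ≤ z := by
      have h1 := hB' i hi1
      have h2 := hC' _ (hlr i hi1)
      have h3 : f (f z) ≤ f (min 1 (h (x (i + 1)))) :=
        hfS.anti.antitoneOn ⟨hb.1.le.trans hbm, hm1⟩
          ⟨(hb.1.le.trans hbm).trans h1, (hfS.maps ⟨by linarith, by linarith⟩).2⟩ h1
      exact (h3.trans h2).trans (max_le_max hc0.le (hmono.monotone hi2))
    have hsub : Icc b' z ⊆ Icc 0 1 := Icc_subset_Icc hb'.1 (by linarith)
    obtain ⟨w, hw, hfw⟩ := exists_mem_Icc_isFixedPt (a := b') (b := z) (f := fun t => f (f t))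
      (hfS.continuousOn.comp (hfS.continuousOn.mono hsub) (fun t ht => hfS.maps (hsub ht)))
      (hb'.2.trans hcz) (by simp only [hfb', hfb]; linarith [hb'.2, hb.1]) hffz
    have hfw : f (f w) = w := hfw
    have hwq : f^[2] w = w := hfw
    refine ⟨w, hsub hw, mk_mem_periodicPts Nat.two_pos hwq,
      (hfS.lt_apply hb hfb (by linarith [hw.1]) (by linarith [hw.2])).ne', ?_⟩
    have hchi2 : ∀ t, f (f t) = t → chi f t = 1 / 2 := fun t ht => by
      rw [chi, if_pos]
      rw [ht]
      nlinarith [sq_nonneg (f t - t)]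
    rw [overRotNum_eq_of_iterate_eq Nat.two_pos hwq, hg2]
    rw [Finset.sum_range_succ, Finset.sum_range_one]
    simp only [iterate_zero, id, iterate_one]
    rw [hchi2 w hfw, hchi2 (f w) (by rw [hfw])]
    norm_num
end

section
/- Let f,g∈ℋ with f(x)≥g(x) for all x∈[0,1] and f≠g, and suppose g has a fixed point a_g∈[c_g,1]. Then f has a unique fixed point a_f in [c_f,1]; moreover a_f>a_g, a_g/a'_g < a_f/a'_f, and f'(a_f)≤g'(a_g). -/
open Set Polynomial

/-- The class ℋ: nonzero real polynomials of degree at most 3 with `f(0)=f(1)=0`,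
nonnegative on `[0,1]`, and with exactly one critical point `c` in `[0,1]`. -/
structure HClass (f : Polynomial ℝ) (c : ℝ) : Prop where
  deg : f.degree ≤ 3
  ne0 : f ≠ 0
  f0 : f.eval 0 = 0
  f1 : f.eval 1 = 0
  nonneg : ∀ x ∈ Set.Icc (0:ℝ) 1, 0 ≤ f.eval x
  hc : c ∈ Set.Icc (0:ℝ) 1
  crit : f.derivative.eval c = 0
  uniq : ∀ y ∈ Set.Icc (0:ℝ) 1, f.derivative.eval y = 0 → y = c

namespace HClass

variable {f : Polynomial ℝ} {c : ℝ}

theorem exists_coeffs (hf : HClass f c) : ∃ A B : ℝ, 0 < A ∧ 0 < B ∧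
    (∀ x, f.eval x = x * (1 - x) * (A * (1 - x) + B * x)) ∧
    ∀ x, f.derivative.eval x = A * (1 - x) * (1 - 3 * x) + B * x * (2 - 3 * x) := by
  have hdeg : f.natDegree < 4 :=
    Nat.lt_succ_of_le (natDegree_le_of_degree_le hf.deg)
  have hdeg' : f.derivative.natDegree < 3 := by
    have := natDegree_derivative_le f
    omega
  have eval_f : ∀ x, f.eval x = f.coeff 0 + f.coeff 1 * x + f.coeff 2 * x ^ 2
      + f.coeff 3 * x ^ 3 := fun x => by
    rw [eval_eq_sum_range' hdeg]
    simp [Finset.sum_range_succ]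
  have eval_f' : ∀ x, f.derivative.eval x = f.coeff 1 + 2 * f.coeff 2 * x
      + 3 * f.coeff 3 * x ^ 2 := fun x => by
    rw [eval_eq_sum_range' hdeg']
    simp [Finset.sum_range_succ, coeff_derivative]
    ring
  have h0 := hf.f0
  have h1 := hf.f1
  rw [eval_f] at h0 h1
  obtain ⟨A, hA⟩ : ∃ A, A = f.coeff 1 := ⟨_, rfl⟩
  obtain ⟨B, hB⟩ : ∃ B, B = -(f.coeff 1 + 2 * f.coeff 2 + 3 * f.coeff 3) := ⟨_, rfl⟩
  have e0 : f.coeff 0 = 0 := by linarith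
  have e2 : f.coeff 2 = B - 2 * A := by linarith
  have e3 : f.coeff 3 = A - B := by linarith
  have value : ∀ x, f.eval x = x * (1 - x) * (A * (1 - x) + B * x) := fun x => by
    rw [eval_f, e0, e2, e3, ← hA]; ring
  have slope : ∀ x, f.derivative.eval x
      = A * (1 - x) * (1 - 3 * x) + B * x * (2 - 3 * x) := fun x => by
    rw [eval_f', e2, e3, ← hA]; ring
  have hpos : ∀ x ∈ Ioo (0 : ℝ) 1, 0 ≤ A * (1 - x) + B * x := fun x hx => by
    have := hf.nonneg x (Ioo_subset_Icc_self hx)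
    rw [value] at this
    exact nonneg_of_mul_nonneg_right this (mul_pos hx.1 (sub_pos.2 hx.2))
  have hpos' : ∀ x ∈ Icc (0 : ℝ) 1, 0 ≤ A * (1 - x) + B * x := by
    have hclosed : IsClosed {x : ℝ | 0 ≤ A * (1 - x) + B * x} :=
      isClosed_le (by fun_prop) (by fun_prop)
    rw [← closure_Ioo zero_ne_one]
    exact closure_minimal hpos hclosed
  have hA0 : 0 ≤ A := by simpa using hpos' 0 (by simp)
  have hB0 : 0 ≤ B := by simpa using hpos' 1 (by simp)
  refine ⟨A, B, hA0.lt_of_ne fun h => ?_, hB0.lt_of_ne fun h => ?_, value, slope⟩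
  · have p := hf.uniq 0 (by simp) (by rw [slope, ← h]; ring)
    have q := hf.uniq (2 / 3) (by norm_num) (by rw [slope, ← h]; ring)
    linarith
  · have p := hf.uniq 1 (by simp) (by rw [slope, ← h]; ring)
    have q := hf.uniq (1 / 3) (by norm_num) (by rw [slope, ← h]; ring)
    linarith

theorem crit_mem_Ioo (hf : HClass f c) : c ∈ Ioo (1 / 3 : ℝ) (2 / 3) := by
  obtain ⟨A, B, hA, hB, -, slope⟩ := hf.exists_coeffs
  have h := hf.crit
  rw [slope] at h
  obtain ⟨h0, h1⟩ := hf.hc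
  have h0' : 0 < c := h0.lt_of_ne (by rintro rfl; norm_num at h; exact hA.ne' h)
  have h1' : c < 1 := h1.lt_of_ne (by rintro rfl; norm_num at h; exact hB.ne' h)
  have hA' : 0 < A * (1 - c) := mul_pos hA (by linarith)
  have hB' : 0 < B * c := mul_pos hB h0'
  constructor
  · by_contra! hc
    nlinarith [mul_nonneg hA'.le (by linarith : (0 : ℝ) ≤ 1 - 3 * c),
      mul_pos hB' (by linarith : (0 : ℝ) < 2 - 3 * c)]
  · by_contra! hc
    nlinarith [mul_pos hA' (by linarith : (0 : ℝ) < 3 * c - 1),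
      mul_nonneg hB'.le (by linarith : (0 : ℝ) ≤ 3 * c - 2)]

theorem exists_derivative_factor (hf : HClass f c) : ∃ m : ℝ → ℝ,
    (∀ x ∈ Icc (0 : ℝ) 1, 0 < m x) ∧ ∀ x, f.derivative.eval x = (c - x) * m x := by
  obtain ⟨A, B, hA, hB, -, slope⟩ := hf.exists_coeffs
  have h := hf.crit
  rw [slope] at h
  obtain ⟨h0, h1⟩ := hf.crit_mem_Ioo
  have hc0 : 0 < c := by linarith
  have hc1 : 0 < 1 - c := by linarith
  refine ⟨fun x => A / c * (1 - x) + B / (1 - c) * x, fun x hx => ?_, fun x => ?_⟩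
  · have hA' : 0 < A / c := div_pos hA hc0
    have hB' : 0 < B / (1 - c) := div_pos hB hc1
    rcases hx.1.eq_or_lt with rfl | hx0
    · simpa using hA'
    · have := mul_pos hB' hx0
      have := mul_nonneg hA'.le (sub_nonneg.2 hx.2)
      simp only
      linarith
  · rw [slope]
    field_simp
    linear_combination x * (1 - x) * h

theorem strictMonoOn (hf : HClass f c) : StrictMonoOn (fun x => f.eval x) (Icc 0 c) := by
  obtain ⟨m, hm, hfac⟩ := hf.exists_derivative_factor
  refine strictMonoOn_of_deriv_pos (convex_Icc 0 c) f.continuous.continuousOn fun x hx => ?_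
  rw [interior_Icc] at hx
  rw [Polynomial.deriv, hfac]
  exact mul_pos (sub_pos.2 hx.2) (hm x ⟨hx.1.le, hx.2.le.trans hf.hc.2⟩)

theorem strictAntiOn (hf : HClass f c) : StrictAntiOn (fun x => f.eval x) (Icc c 1) := by
  obtain ⟨m, hm, hfac⟩ := hf.exists_derivative_factor
  refine strictAntiOn_of_deriv_neg (convex_Icc c 1) f.continuous.continuousOn fun x hx => ?_
  rw [interior_Icc] at hx
  rw [Polynomial.deriv, hfac]
  exact mul_neg_of_neg_of_pos (sub_neg.2 hx.1) (hm x ⟨hf.hc.1.trans hx.1.le, hx.2.le⟩)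

end HClass

/-- The slope of a bump with left coefficient `A` at a fixed point `1 - u` is
`3 - 1 / u - A * u`. -/
theorem slope_at_fixedPoint {A B u : ℝ} (hu : 0 < u) (h : u * (A * u + B * (1 - u)) = 1) :
    A * u * (1 - 3 * (1 - u)) + B * (1 - u) * (2 - 3 * (1 - u)) = 3 - 1 / u - A * u := by
  field_simp
  linear_combination (3 * u - 1) * h

/-- At a fixed point `a`, the value of a bump at `s * a` exceeds `a` exactly when
`A * s * (1 - s)` exceeds a threshold depending only on `s` and `a`. -/
theorem value_sub_fixedPoint {A B a s : ℝ} (ha : 0 < 1 - a) (hw : 0 < 1 - s * a)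
    (h : (1 - a) * (A * (1 - a) + B * a) = 1) :
    s * a * (1 - s * a) * (A * (1 - s * a) + B * (s * a)) - a =
      a * (1 - s * a) * (A * s * (1 - s) - (1 / (1 - s * a) - s ^ 2 / (1 - a))) := by
  field_simp
  linear_combination s ^ 2 * (1 - s * a) * a * h

theorem threshold_lt {a b s : ℝ} (hs0 : 0 < s) (hs1 : s < 1) (hab : a < b)
    (hb : b < 1) (h : (1 - a) ^ 2 < s * (1 - s * a) ^ 2) :
    1 / (1 - s * b) - s ^ 2 / (1 - b) < 1 / (1 - s * a) - s ^ 2 / (1 - a) := by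
  have hu : 0 < 1 - a := by linarith
  have hv : 0 < 1 - b := by linarith
  have hwa : 0 < 1 - s * a := by nlinarith
  have hwb : 0 < 1 - s * b := by nlinarith
  have hratio : (1 - s * a) * (1 - b) ≤ (1 - s * b) * (1 - a) := by
    nlinarith [mul_pos (sub_pos.2 hs1) (sub_pos.2 hab)]
  have key : (1 - a) * (1 - b) < s * (1 - s * a) * (1 - s * b) := by
    have h1 := mul_le_mul_of_nonneg_left hratio (mul_pos hs0 hwa).le
    have h2 := mul_lt_mul_of_pos_right h hv
    refine lt_of_mul_lt_mul_right ?_ hu.le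
    linarith
  have diff : 1 / (1 - s * a) - s ^ 2 / (1 - a) - (1 / (1 - s * b) - s ^ 2 / (1 - b)) =
      s * (b - a) * (s * (1 - s * a) * (1 - s * b) - (1 - a) * (1 - b)) /
        ((1 - a) * (1 - b) * (1 - s * a) * (1 - s * b)) := by
    field_simp
    ring
  have : 0 < s * (b - a) * (s * (1 - s * a) * (1 - s * b) - (1 - a) * (1 - b)) /
      ((1 - a) * (1 - b) * (1 - s * a) * (1 - s * b)) := by
    have := sub_pos.2 key
    have := sub_pos.2 hab
    positivity
  linarith

/-- If the bump with coefficients `A`, `B` has fixed point `a` and also takes the value `a` at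
`s * a`, then the bump with coefficients `A' ≥ A`, `B'` and fixed point `b > a` takes a value
larger than `b` at `s * b`. -/
theorem lt_value_of_fixedPoint_lt {A B A' B' a b s : ℝ} (hB : 0 < B) (hA : A ≤ A')
    (hs0 : 0 < s) (hs1 : s < 1) (ha : 0 < a) (hab : a < b) (hb : b < 1)
    (hfix : (1 - a) * (A * (1 - a) + B * a) = 1)
    (hfix' : (1 - b) * (A' * (1 - b) + B' * b) = 1)
    (hs : s * a * (1 - s * a) * (A * (1 - s * a) + B * (s * a)) = a) :
    b < s * b * (1 - s * b) * (A' * (1 - s * b) + B' * (s * b)) := by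
  have hu : 0 < 1 - a := by linarith
  have hv : 0 < 1 - b := by linarith
  have hwa : 0 < 1 - s * a := by nlinarith
  have hwb : 0 < 1 - s * b := by nlinarith
  have hs' : s * (1 - s * a) * (A * (1 - s * a) + B * (s * a)) = 1 :=
    mul_left_cancel₀ ha.ne' (by linear_combination hs)
  have hlt : (1 - a) ^ 2 < s * (1 - s * a) ^ 2 := by
    have e : s * (1 - s * a) ^ 2 - (1 - a) ^ 2 = s * (1 - s * a) * (1 - a) * (B * a) * (1 - s) := by
      linear_combination (1 - a) ^ 2 * hs' - s * (1 - s * a) ^ 2 * hfix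
    have := sub_pos.2 hs1
    have : 0 < s * (1 - s * a) * (1 - a) * (B * a) * (1 - s) := by positivity
    linarith
  have hthr := threshold_lt hs0 hs1 hab hb hlt
  have e := value_sub_fixedPoint hu hwa hfix
  rw [hs, sub_self, eq_comm, mul_eq_zero, or_iff_right (by positivity)] at e
  have hmono : A * s * (1 - s) ≤ A' * s * (1 - s) := by
    have := sub_pos.2 hs1
    gcongr
  have e' := value_sub_fixedPoint hv hwb hfix'
  have : 0 < b * (1 - s * b) *
      (A' * s * (1 - s) - (1 / (1 - s * b) - s ^ 2 / (1 - b))) :=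
    mul_pos (mul_pos (ha.trans hab) hwb) (by linarith)
  linarith

/-- Increasing the left coefficient and the fixed point decreases the slope there. -/
theorem slope_le_of_fixedPoint_lt {A A' u v : ℝ} (hv : 0 < v) (hvu : v < u)
    (hA : A ≤ A') (hu : A * u ^ 2 ≤ 1) :
    3 - 1 / v - A' * v ≤ 3 - 1 / u - A * u := by
  have hu0 : 0 < u := hv.trans hvu
  have h1 : A * v ≤ A' * v := by gcongr
  have h2 : A * (u * v) ≤ 1 :=
    le_of_mul_le_mul_right (by linarith [mul_le_mul_of_nonneg_right hu hv.le]) hu0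
  have e : 1 / v - 1 / u - (A * u - A * v) = (u - v) * (1 - A * (u * v)) / (u * v) := by
    field_simp
  have : 0 ≤ (u - v) * (1 - A * (u * v)) / (u * v) :=
    div_nonneg (mul_nonneg (by linarith) (by linarith)) (by positivity)
  linarith

/-- If the average slope `f c / c` of a bump at its turning point `c` is at least `1`, it is
greater than `1` for a bump with larger left coefficient and larger turning point. -/
theorem one_lt_average_slope {A B A' B' c c' : ℝ} (hc : c ∈ Ioo (1 / 3 : ℝ) (2 / 3))
    (hc' : c' ∈ Ioo (1 / 3 : ℝ) (2 / 3)) (hcc : c < c') (hA : A ≤ A')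
    (hcrit : A * (1 - c) * (1 - 3 * c) + B * c * (2 - 3 * c) = 0)
    (hcrit' : A' * (1 - c') * (1 - 3 * c') + B' * c' * (2 - 3 * c') = 0)
    (h : 1 ≤ (1 - c) * (A * (1 - c) + B * c)) :
    1 < (1 - c') * (A' * (1 - c') + B' * c') := by
  obtain ⟨hc1, hc2⟩ := hc
  obtain ⟨hc1', hc2'⟩ := hc'
  have e : (2 - 3 * c) * ((1 - c) * (A * (1 - c) + B * c)) = A * (1 - c) ^ 2 := by
    linear_combination (1 - c) * hcrit
  have e' : (2 - 3 * c') * ((1 - c') * (A' * (1 - c') + B' * c')) = A' * (1 - c') ^ 2 := by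
    linear_combination (1 - c') * hcrit'
  have hk : 2 - 3 * c ≤ A * (1 - c) ^ 2 := by nlinarith
  have hk' : 2 - 3 * c' < A' * (1 - c') ^ 2 := by
    have hu : 0 < (1 - c) ^ 2 := by nlinarith
    have hv : 0 < (1 - c') ^ 2 := by nlinarith
    have h1 := mul_le_mul_of_nonneg_right hk hv.le
    have h2 := mul_le_mul_of_nonneg_right hA (mul_pos hu hv).le
    have h3 : 0 < (c' - c) * ((1 - c) + (1 - c') - 3 * (1 - c) * (1 - c')) :=
      mul_pos (by linarith) (by nlinarith)
    refine lt_of_mul_lt_mul_right ?_ hu.le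
    nlinarith
  by_contra! hle
  nlinarith

/-- Pointwise domination of bumps is inherited by the coefficients. -/
theorem coeffs_le_of_bump_le {A B A' B' : ℝ}
    (h : ∀ x ∈ Icc (0 : ℝ) 1, x * (1 - x) * (A * (1 - x) + B * x) ≤
      x * (1 - x) * (A' * (1 - x) + B' * x)) : A ≤ A' ∧ B ≤ B' := by
  have hle : ∀ x ∈ Ioo (0 : ℝ) 1, A * (1 - x) + B * x ≤ A' * (1 - x) + B' * x := fun x hx =>
    le_of_mul_le_mul_left (h x (Ioo_subset_Icc_self hx)) (mul_pos hx.1 (sub_pos.2 hx.2))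
  have hle' : ∀ x ∈ Icc (0 : ℝ) 1, A * (1 - x) + B * x ≤ A' * (1 - x) + B' * x := by
    have hclosed : IsClosed {x : ℝ | A * (1 - x) + B * x ≤ A' * (1 - x) + B' * x} :=
      isClosed_le (by fun_prop) (by fun_prop)
    rw [← closure_Ioo zero_ne_one]
    exact closure_minimal hle hclosed
  exact ⟨by simpa using hle' 0 (by simp), by simpa using hle' 1 (by simp)⟩

theorem stmt17 (f g : Polynomial ℝ) (cf cg : ℝ) (hf : HClass f cf) (hg : HClass g cg)
    (hge : ∀ x ∈ Set.Icc (0:ℝ) 1, g.eval x ≤ f.eval x) (hfg : f ≠ g)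
    (ag : ℝ) (hag : ag ∈ Set.Icc cg 1) (hgag : g.eval ag = ag) :
    ∃ af ∈ Set.Icc cf 1, f.eval af = af ∧
      (∀ y ∈ Set.Icc cf 1, f.eval y = y → y = af) ∧
      ag < af ∧
      f.derivative.eval af ≤ g.derivative.eval ag ∧
      -- a_g/a'_g < a_f/a'_f, where a'_f, a'_g are the points on the other side of the
      -- turning points with f(a'_f) = a_f and g(a'_g) = a_g
      (∀ af' ∈ Set.Icc (0:ℝ) cf, f.eval af' = af →
        ∀ ag' ∈ Set.Icc (0:ℝ) cg, g.eval ag' = ag → ag / ag' < af / af') := by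
  obtain ⟨A, B, hA, hB, gval, gslope⟩ := hg.exists_coeffs
  obtain ⟨A', B', hA', hB', fval, fslope⟩ := hf.exists_coeffs
  have hcg := hg.crit_mem_Ioo
  have hcf := hf.crit_mem_Ioo
  obtain ⟨hAA, hBB⟩ := coeffs_le_of_bump_le (A := A) (B := B) (A' := A') (B' := B')
    fun x hx => by simpa only [fval, gval] using hge x hx
  have hag0 : 0 < ag := by linarith [hcg.1, hag.1]
  have hag1 : ag < 1 := hag.2.lt_of_ne (by rintro rfl; linarith [hg.f1])
  have gfix : (1 - ag) * (A * (1 - ag) + B * ag) = 1 :=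
    mul_left_cancel₀ hag0.ne' (by rw [gval] at hgag; linear_combination hgag)
  have hlt : ag < f.eval ag := by
    refine (hgag.ge.trans (hge ag ⟨hag0.le, hag1.le⟩)).lt_of_ne fun he => hfg ?_
    replace he := hgag.trans he
    rw [fval, gval] at he
    have he' := mul_left_cancel₀ (mul_pos hag0 (sub_pos.2 hag1)).ne' he
    have hA_eq : A = A' := by nlinarith [mul_le_mul_of_nonneg_right hBB hag0.le]
    have hB_eq : B = B' := by nlinarith
    exact Polynomial.funext fun x => by rw [fval, gval, hA_eq, hB_eq]
  obtain ⟨p, hp, hpf⟩ : ∃ p, (ag ≤ p ∧ cf ≤ p ∧ p ≤ 1) ∧ p < f.eval p := by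
    rcases le_or_gt cf ag with h | h
    · exact ⟨ag, ⟨le_rfl, h, hag1.le⟩, hlt⟩
    · refine ⟨cf, ⟨h.le, le_rfl, hf.hc.2⟩, ?_⟩
      have gcrit := hg.crit
      have fcrit := hf.crit
      rw [gslope] at gcrit
      rw [fslope] at fcrit
      have hmax : ag ≤ g.eval cg :=
        hgag.ge.trans (hg.strictAntiOn.antitoneOn ⟨le_rfl, hg.hc.2⟩ hag hag.1)
      rw [gval] at hmax
      have h1 : 1 ≤ (1 - cg) * (A * (1 - cg) + B * cg) :=
        le_of_mul_le_mul_left (by linarith [hag.1]) (show 0 < cg by linarith [hcg.1])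
      have h2 := one_lt_average_slope hcg hcf (hag.1.trans_lt h) hAA gcrit fcrit h1
      have := mul_lt_mul_of_pos_left h2 (show 0 < cf by linarith [hcf.1])
      rw [fval]
      linarith
  obtain ⟨af, haf, hfaf⟩ : ∃ x ∈ Icc p 1, f.eval x - x = 0 :=
    intermediate_value_Icc' hp.2.2 (f.continuous.sub continuous_id).continuousOn
      ⟨by simp [hf.f1], by simpa using hpf.le⟩
  rw [sub_eq_zero] at hfaf
  have hpaf : p < af := haf.1.lt_of_ne (by rintro rfl; exact hpf.ne hfaf.symm)
  have hab : ag < af := hp.1.trans_lt hpaf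
  have hcaf : cf < af := hp.2.1.trans_lt hpaf
  have haf0 : 0 < af := hag0.trans hab
  have haf1 : af < 1 := haf.2.lt_of_ne (by rintro rfl; linarith [hf.f1])
  have ffix : (1 - af) * (A' * (1 - af) + B' * af) = 1 :=
    mul_left_cancel₀ haf0.ne' (by rw [fval] at hfaf; linear_combination hfaf)
  refine ⟨af, ⟨hcaf.le, haf.2⟩, hfaf, fun y hy hfy => ?_, hab, ?_, ?_⟩
  · rcases lt_trichotomy y af with h | h | h
    · have : f.eval af < f.eval y := hf.strictAntiOn hy ⟨hcaf.le, haf.2⟩ h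
      linarith
    · exact h
    · have : f.eval y < f.eval af := hf.strictAntiOn ⟨hcaf.le, haf.2⟩ hy h
      linarith
  · have gs := slope_at_fixedPoint (A := A) (B := B) (u := 1 - ag) (by linarith)
      (by linear_combination gfix)
    have fs := slope_at_fixedPoint (A := A') (B := B') (u := 1 - af) (by linarith)
      (by linear_combination ffix)
    rw [sub_sub_cancel] at gs fs
    rw [fslope, gslope, gs, fs]
    refine slope_le_of_fixedPoint_lt (by linarith) (by linarith) hAA ?_
    nlinarith [mul_pos (sub_pos.2 hag1) (mul_pos hB hag0)]
  · intro af' haf' hfaf' ag' hag' hgag'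
    have hag0' : 0 < ag' := hag'.1.lt_of_ne (by rintro rfl; linarith [hg.f0])
    have haf0' : 0 < af' := haf'.1.lt_of_ne (by rintro rfl; linarith [hf.f0])
    rw [div_lt_div_iff₀ hag0' haf0']
    obtain ⟨s, rfl⟩ : ∃ s, ag' = s * ag := ⟨ag' / ag, by field_simp⟩
    have hs0 : 0 < s := pos_of_mul_pos_left hag0' hag0.le
    have hs1 : s ≤ 1 := by
      by_contra! h
      nlinarith [hag'.2, hag.1]
    suffices af' < s * af by
      have := mul_lt_mul_of_pos_left this hag0
      linarith
    rcases hs1.eq_or_lt with rfl | hs1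
    · linarith [haf'.2]
    · rw [gval] at hgag'
      have hval := lt_value_of_fixedPoint_lt hB hAA hs0 hs1 hag0 hab haf1 gfix ffix hgag'
      rw [← fval] at hval
      by_contra! h
      have : f.eval (s * af) ≤ f.eval af' :=
        hf.strictMonoOn.monotoneOn ⟨by positivity, h.trans haf'.2⟩ haf' h
      linarith
end

section
/- Let f,g∈𝒢 with f(x)≥g(x) for all x∈[0,1]. Then I_f ⊇ I_g. -/
open Set Function

/-- The class 𝒢 ⊂ 𝒮: maps in 𝒮 that are restrictions to `[0,1]` of real polynomials of
degree at most 3. -/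
def GClass (f : ℝ → ℝ) (c : ℝ) : Prop :=
  SClass f c ∧ ∃ P : Polynomial ℝ, P.degree ≤ 3 ∧ ∀ x ∈ Set.Icc (0:ℝ) 1, f x = P.eval x

/-- A system of one-dimensional inequalities `k i (w i) ≤ w (σ i)` on intervals `[lo i, hi i]`
whose right endpoints satisfy the opposite inequalities has a solution by equalities. -/
theorem exists_eq_of_subsolution {ι : Type*} (σ : ι → ι) (lo hi : ι → ℝ) (k : ι → ℝ → ℝ)
    (hk : ∀ i, ContinuousOn (k i) (Icc (lo i) (hi i)))
    (hhi : ∀ i, hi (σ i) ≤ k i (hi i))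
    (z : ι → ℝ) (hz : ∀ i, z i ∈ Icc (lo i) (hi i)) (hkz : ∀ i, k i (z i) ≤ z (σ i)) :
    ∃ y : ι → ℝ, (∀ i, y i ∈ Icc (lo i) (hi i)) ∧ ∀ i, k i (y i) = y (σ i) := by
  classical
  set W : Set (ι → ℝ) := {w | (∀ i, w i ∈ Icc (lo i) (hi i)) ∧ ∀ i, k i (w i) ≤ w (σ i)} with hW
  have hzW : z ∈ W := ⟨hz, hkz⟩
  have hne : ∀ i, ((fun w : ι → ℝ => w i) '' W).Nonempty := fun i => ⟨z i, z, hzW, rfl⟩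
  have hbdd : ∀ i, BddAbove ((fun w : ι → ℝ => w i) '' W) := by
    rintro i
    refine ⟨hi i, ?_⟩
    rintro _ ⟨w, hw, rfl⟩
    exact (hw.1 i).2
  set y : ι → ℝ := fun i => sSup ((fun w : ι → ℝ => w i) '' W) with hy
  have hle : ∀ w ∈ W, ∀ i, w i ≤ y i := fun w hw i => le_csSup (hbdd i) ⟨w, hw, rfl⟩
  have hyW : y ∈ W := by
    have key : ∀ i, y i ∈ Icc (lo i) (hi i) ∩ k i ⁻¹' Iic (y (σ i)) := by
      intro i
      have hcl := (hk i).preimage_isClosed_of_isClosed isClosed_Icc (isClosed_Iic (a := y (σ i)))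
      have hsub : (fun w : ι → ℝ => w i) '' W ⊆ Icc (lo i) (hi i) ∩ k i ⁻¹' Iic (y (σ i)) := by
        rintro _ ⟨w, hw, rfl⟩
        exact ⟨hw.1 i, (hw.2 i).trans (hle w hw _)⟩
      exact closure_minimal hsub hcl (csSup_mem_closure (hne i) (hbdd i))
    exact ⟨fun i => (key i).1, fun i => (key i).2⟩
  refine ⟨y, hyW.1, fun i => le_antisymm (hyW.2 i) ?_⟩
  obtain ⟨t, ht, hkt⟩ : y (σ i) ∈ k i '' Icc (y i) (hi i) :=
    intermediate_value_Icc (hyW.1 i).2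
      ((hk i).mono (Icc_subset_Icc_left (hyW.1 i).1))
      ⟨hyW.2 i, (hyW.1 (σ i)).2.trans (hhi i)⟩
  have hupd : ∀ j, y j ≤ update y i t j := by
    intro j
    by_cases h : j = i
    · subst h; simpa using ht.1
    · simp [h]
  have htW : update y i t ∈ W := by
    refine ⟨fun j => ?_, fun j => ?_⟩
    · by_cases h : j = i
      · subst h; simpa using ⟨(hyW.1 j).1.trans ht.1, ht.2⟩
      · simpa [h] using hyW.1 j
    · by_cases h : j = i
      · subst h
        simpa [hkt] using hupd (σ j)
      · simpa [h] using (hyW.2 j).trans (hupd (σ j))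
  have hti : t ≤ y i := by simpa using hle _ htW i
  rw [← hkt, le_antisymm ht.1 hti]

theorem nonneg_of_nonneg_on_Ioo {A B : ℝ} (h : ∀ x ∈ Ioo (0 : ℝ) 1, 0 ≤ A * (1 - x) + B * x) :
    0 ≤ A ∧ 0 ≤ B := by
  have hcl : IsClosed {x : ℝ | 0 ≤ A * (1 - x) + B * x} :=
    isClosed_le continuous_const (by fun_prop)
  have hsub := closure_minimal (s := Ioo (0 : ℝ) 1) h hcl
  rw [closure_Ioo zero_ne_one] at hsub
  have h0 : 0 ≤ A * (1 - 0) + B * 0 := hsub (left_mem_Icc.2 zero_le_one)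
  have h1 : 0 ≤ A * (1 - 1) + B * 1 := hsub (right_mem_Icc.2 zero_le_one)
  constructor <;> linarith

/-- The cubic vanishing at `0` and `1` with slope `q` at `0` and slope `-p` at `1`. -/
def cubic (p q x : ℝ) : ℝ := x * (1 - x) * (q * (1 - x) + p * x)

theorem coeff_le_of_cubic_le {p q p' q' : ℝ}
    (h : ∀ x ∈ Icc (0 : ℝ) 1, cubic p q x ≤ cubic p' q' x) : q ≤ q' ∧ p ≤ p' := by
  have := nonneg_of_nonneg_on_Ioo (A := q' - q) (B := p' - p) fun x hx => by
    have h1 := h x (Ioo_subset_Icc_self hx)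
    have h2 : 0 < x * (1 - x) := mul_pos hx.1 (by linarith [hx.2])
    unfold cubic at h1
    have h3 := le_of_mul_le_mul_left h1 h2
    linarith
  constructor <;> linarith [this.1, this.2]

theorem GClass.exists_cubic {f : ℝ → ℝ} {c : ℝ} (hf : GClass f c) :
    ∃ p q : ℝ, ∀ x ∈ Icc (0 : ℝ) 1, f x = cubic p q x := by
  obtain ⟨hS, P, hdeg, hP⟩ := hf
  have hev : ∀ x, P.eval x = P.coeff 0 + P.coeff 1 * x + P.coeff 2 * x ^ 2 + P.coeff 3 * x ^ 3 := by
    intro x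
    have hn : P.natDegree < 4 :=
      Nat.lt_succ_of_le (Polynomial.natDegree_le_iff_degree_le.2 hdeg)
    rw [Polynomial.eval_eq_sum_range' hn]
    simp [Finset.sum_range_succ]
  have h0 := hP 0 (left_mem_Icc.2 zero_le_one)
  have h1 := hP 1 (right_mem_Icc.2 zero_le_one)
  rw [hS.f0, hev] at h0
  rw [hS.f1, hev] at h1
  refine ⟨P.coeff 1 - P.coeff 3, P.coeff 1, fun x hx => ?_⟩
  rw [hP x hx, hev, cubic]
  linear_combination (-1 + x ^ 2) * h0 - x ^ 2 * h1

theorem GClass.continuousOn {f : ℝ → ℝ} {c : ℝ} (hf : GClass f c) :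
    ContinuousOn f (Icc 0 1) := by
  obtain ⟨p, q, h⟩ := hf.exists_cubic
  refine ContinuousOn.congr (f := cubic p q) ?_ h
  unfold cubic
  fun_prop

/-- `a` is the positive fixed point of `f`, and `b` is its other preimage. -/
structure Landmarks (f : ℝ → ℝ) (c a b : ℝ) : Prop where
  c_lt_a : c < a
  a_lt_one : a < 1
  fixed : f a = a
  b_pos : 0 < b
  b_lt_c : b < c
  preimage : f b = a

namespace SClass

variable {f : ℝ → ℝ} {c a b x : ℝ}

theorem exists_landmarks (hf : SClass f c) (hcont : ContinuousOn f (Icc 0 1)) :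
    ∃ a b, Landmarks f c a b := by
  have hc := hf.hc
  obtain ⟨a, ha, hfa⟩ : ∃ a ∈ Icc c 1, f a - a = 0 := by
    have hcon : ContinuousOn (fun x => f x - x) (Icc c 1) :=
      (hcont.mono (Icc_subset_Icc_left hc.1.le)).sub continuousOn_id
    exact intermediate_value_Icc' hc.2.le hcon
      ⟨by simp [hf.f1], by simpa using hf.fcgt.le⟩
  have hfa' : f a = a := by linarith
  have hca : c < a := lt_of_le_of_ne ha.1 fun h => by
    have := hf.fcgt
    rw [h, hfa'] at this
    exact lt_irrefl _ this
  have ha1 : a < 1 := lt_of_le_of_ne ha.2 fun h => by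
    rw [h, hf.f1] at hfa'
    norm_num at hfa'
  have hac : a < f c := by
    have := hf.anti (left_mem_Icc.2 hc.2.le) ⟨hca.le, ha1.le⟩ hca
    rwa [hfa'] at this
  obtain ⟨b, hb, hfb⟩ : a ∈ f '' Icc 0 c :=
    intermediate_value_Icc hc.1.le (hcont.mono (Icc_subset_Icc_right hc.2.le))
      ⟨by rw [hf.f0]; linarith [hc.1], hac.le⟩
  refine ⟨a, b, hca, ha1, hfa', lt_of_le_of_ne hb.1 fun h => ?_, lt_of_le_of_ne hb.2 fun h => ?_,
    hfb⟩
  · rw [← h, hf.f0] at hfb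
    linarith [hc.1]
  · rw [h] at hfb
    linarith

theorem lt_apply_s18 (hf : SClass f c) (h : Landmarks f c a b) (h0 : 0 < x) (hx : x < a) :
    x < f x := by
  have hc := hf.hc
  have h1 := h.a_lt_one
  rcases lt_or_ge x c with hxc | hxc
  · have hconc := hf.concave.2 (left_mem_Icc.2 zero_le_one) (Ioo_subset_Icc_self hc)
      (show 0 ≤ 1 - x / c by rw [sub_nonneg, div_le_one hc.1]; exact hxc.le)
      (div_pos h0 hc.1).le (by ring)
    have hxc' : x / c * c = x := div_mul_cancel₀ _ hc.1.ne'
    simp only [hf.f0, smul_eq_mul, mul_zero, zero_add, hxc'] at hconc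
    have := mul_lt_mul_of_pos_left hf.fcgt (div_pos h0 hc.1)
    linarith
  · have := hf.anti ⟨hxc, by linarith⟩ ⟨h.c_lt_a.le, h1.le⟩ hx
    rw [h.fixed] at this
    linarith

theorem apply_lt_of_gt (hf : SClass f c) (h : Landmarks f c a b) (hx : a < x) (hx1 : x ≤ 1) :
    f x < a := by
  have := hf.anti ⟨h.c_lt_a.le, h.a_lt_one.le⟩ ⟨by linarith [h.c_lt_a], hx1⟩ hx
  rwa [h.fixed] at this

theorem apply_le_of_le (hf : SClass f c) (h : Landmarks f c a b) (h0 : 0 ≤ x) (hx : x ≤ b) :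
    f x ≤ a := by
  have := hf.mono.monotoneOn ⟨h0, by linarith [h.b_lt_c]⟩ ⟨h.b_pos.le, h.b_lt_c.le⟩ hx
  rwa [h.preimage] at this

theorem lt_apply_of_mem_Ioo (hf : SClass f c) (h : Landmarks f c a b) (hb : b < x) (ha : x < a) :
    a < f x := by
  have hb0 := h.b_pos
  rcases le_total x c with hxc | hxc
  · have := hf.mono ⟨hb0.le, h.b_lt_c.le⟩ ⟨by linarith, hxc⟩ hb
    rwa [h.preimage] at this
  · have := hf.anti ⟨hxc, by linarith [h.a_lt_one]⟩ ⟨h.c_lt_a.le, h.a_lt_one.le⟩ ha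
    rwa [h.fixed] at this

end SClass

theorem cubic_eq_mul_linear {e₀ e₁ e₂ e₃ a b : ℝ} (hb : 0 < b) (hba : b < a) (ha : a < 1)
    (hEa : e₀ + e₁ * a + e₂ * a ^ 2 + e₃ * a ^ 3 = 0)
    (hEb : e₀ + e₁ * b + e₂ * b ^ 2 + e₃ * b ^ 3 = 0)
    (hE0 : 0 ≤ e₀) (hE1 : 0 ≤ e₀ + e₁ + e₂ + e₃) {y : ℝ} (hy : y ∈ Icc (0 : ℝ) 1) :
    ∃ l, 0 ≤ l ∧ e₀ + e₁ * y + e₂ * y ^ 2 + e₃ * y ^ 3 = (y - a) * (y - b) * l := by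
  have hab : a - b ≠ 0 := by linarith
  have h1 : e₁ + e₂ * (a + b) + e₃ * (a ^ 2 + a * b + b ^ 2) = 0 := by
    apply mul_left_cancel₀ hab
    linear_combination hEa - hEb
  have h0 : e₀ = a * b * (e₂ + e₃ * (a + b)) := by
    linear_combination hEa - a * h1
  have hfac : ∀ t, e₀ + e₁ * t + e₂ * t ^ 2 + e₃ * t ^ 3 =
      (t - a) * (t - b) * (e₃ * t + (e₂ + e₃ * (a + b))) := by
    intro t
    linear_combination h0 + t * h1
  have hl0 : 0 ≤ e₂ + e₃ * (a + b) := by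
    rw [h0] at hE0
    exact nonneg_of_mul_nonneg_right hE0 (mul_pos (hb.trans hba) hb)
  have hl1 : 0 ≤ e₃ + (e₂ + e₃ * (a + b)) := by
    have := hfac 1
    norm_num at this
    rw [this] at hE1
    exact nonneg_of_mul_nonneg_right hE1 (mul_pos (by linarith) (by linarith))
  refine ⟨_, ?_, hfac y⟩
  have h2 := mul_nonneg hl0 (sub_nonneg.2 hy.2)
  have h3 := mul_nonneg hl1 hy.1
  nlinarith

theorem cubic_ratio_mono {p q p' q' a a' s : ℝ} (ha : 0 < a) (haa : a ≤ a') (ha' : a' < 1)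
    (hp : 0 ≤ p) (hq : 0 ≤ q) (hqq : q ≤ q')
    (hfix : (1 - a) * (q * (1 - a) + p * a) = 1)
    (hfix' : (1 - a') * (q' * (1 - a') + p' * a') = 1) (hs0 : 0 ≤ s) (hs1 : s ≤ 1) :
    (1 - s * a) * (q * (1 - s * a) + p * (s * a)) ≤
      (1 - s * a') * (q' * (1 - s * a') + p' * (s * a')) := by
  have hv : 0 < 1 - a := by linarith
  have hv' : 0 < 1 - a' := by linarith
  have hκ : q + (p - q) * a ^ 2 = 1 / (1 - a) - 1 + q * (1 - a) := by
    field_simp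
    linear_combination a * hfix
  have hκ' : q' + (p' - q') * a' ^ 2 = 1 / (1 - a') - 1 + q' * (1 - a') := by
    field_simp
    linear_combination a' * hfix'
  have hqv : q * (1 - a) * (1 - a') ≤ 1 := by
    have h1 : 0 ≤ p * a * (1 - a) := by positivity
    have h2 : q * (1 - a) * (1 - a') ≤ q * (1 - a) * (1 - a) := by gcongr
    nlinarith
  have hdiff : q * (a' - a) ≤ 1 / (1 - a') - 1 / (1 - a) := by
    rw [div_sub_div _ _ hv'.ne' hv.ne', le_div_iff₀ (mul_pos hv' hv)]
    have := mul_le_mul_of_nonneg_left hqv (sub_nonneg.2 haa)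
    nlinarith
  have hmain : q + (p - q) * a ^ 2 ≤ q' + (p' - q') * a' ^ 2 := by
    rw [hκ, hκ']
    have := mul_le_mul_of_nonneg_right hqq hv'.le
    nlinarith
  have h1 : 0 ≤ (1 - s) * ((1 - s) * (q' - q) +
      s * ((q' + (p' - q') * a' ^ 2) - (q + (p - q) * a ^ 2))) := by
    have := sub_nonneg.2 hs1
    have := sub_nonneg.2 hqq
    have := sub_nonneg.2 hmain
    positivity
  have h2 : (1 - s * a') * (q' * (1 - s * a') + p' * (s * a')) -
      (1 - s * a) * (q * (1 - s * a) + p * (s * a)) =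
      (1 - s) * ((1 - s) * (q' - q) +
        s * ((q' + (p' - q') * a' ^ 2) - (q + (p - q) * a ^ 2))) := by
    linear_combination s * hfix' - s * hfix
  linarith

/-- The landmark ratio `b / a` decreases when the map increases. -/
theorem Landmarks.ratio_le {f g : ℝ → ℝ} {cf cg a b a' b' p q p' q' : ℝ}
    (hf : SClass f cf) (hg : SClass g cg) (lf : Landmarks f cf a' b') (lg : Landmarks g cg a b)
    (hfc : ∀ x ∈ Icc (0 : ℝ) 1, f x = cubic p' q' x)
    (hgc : ∀ x ∈ Icc (0 : ℝ) 1, g x = cubic p q x)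
    (hge : ∀ x ∈ Icc (0 : ℝ) 1, g x ≤ f x) : a ≤ a' ∧ b' * a ≤ b * a' := by
  have ha0 : 0 < a := hg.hc.1.trans lg.c_lt_a
  have ha0' : 0 < a' := hf.hc.1.trans lf.c_lt_a
  have ha1 := lg.a_lt_one
  have ha1' := lf.a_lt_one
  have hb0 := lg.b_pos
  have hba : b < a := lg.b_lt_c.trans lg.c_lt_a
  have haa : a ≤ a' := by
    by_contra! h
    have h1 := hf.apply_lt_of_gt lf h ha1.le
    have h2 := hge a ⟨ha0.le, ha1.le⟩
    rw [lg.fixed] at h2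
    linarith
  obtain ⟨hqq, -⟩ := coeff_le_of_cubic_le (p := p) (q := q) (p' := p') (q' := q')
    fun x hx => by rw [← hfc x hx, ← hgc x hx]; exact hge x hx
  obtain ⟨hq, hp⟩ := coeff_le_of_cubic_le (p := 0) (q := 0) (p' := p) (q' := q)
    fun x hx => by rw [← hgc x hx]; simpa [cubic] using (hg.maps hx).1
  refine ⟨haa, ?_⟩
  have hfix : (1 - a) * (q * (1 - a) + p * a) = 1 := by
    apply mul_left_cancel₀ ha0.ne'
    have := hgc a ⟨ha0.le, ha1.le⟩
    rw [lg.fixed, cubic] at this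
    linarith
  have hfix' : (1 - a') * (q' * (1 - a') + p' * a') = 1 := by
    apply mul_left_cancel₀ ha0'.ne'
    have := hfc a' ⟨ha0'.le, ha1'.le⟩
    rw [lf.fixed, cubic] at this
    linarith
  have hs0 : 0 < b / a := div_pos hb0 ha0
  have hs1 : b / a < 1 := (div_lt_one ha0).2 hba
  have hratio := cubic_ratio_mono ha0 haa ha1' hp hq hqq hfix hfix' hs0.le hs1.le
  rw [div_mul_cancel₀ _ ha0.ne'] at hratio
  have hbfix : b * ((1 - b) * (q * (1 - b) + p * b)) = a := by
    have := hgc b ⟨hb0.le, by linarith⟩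
    rw [lg.preimage, cubic] at this
    linarith
  by_contra! hlt
  have hsb : b / a * a' < b' := by
    rw [div_mul_eq_mul_div, div_lt_iff₀ ha0]
    exact hlt
  have hpos : 0 < b / a * a' := mul_pos hs0 ha0'
  have hbc' := lf.b_lt_c
  have hc' := hf.hc
  have h1 := hf.mono ⟨hpos.le, by linarith⟩ ⟨lf.b_pos.le, hbc'.le⟩ hsb
  rw [lf.preimage, hfc _ ⟨hpos.le, by linarith [hc'.2]⟩, cubic] at h1
  have h2 := mul_le_mul_of_nonneg_left hratio hpos.le
  have h3 : b / a * a' * ((1 - b) * (q * (1 - b) + p * b)) = a' := by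
    rw [div_mul_eq_mul_div, div_mul_eq_mul_div, div_eq_iff ha0.ne']
    linear_combination a' * hbfix
  linarith

/-- In the affine coordinate matching the landmarks, `f` lies below `g` outside `[b, a]` and above
`g` on `[b, a]`. -/
theorem exists_comparison {f g : ℝ → ℝ} {cf cg a b a' b' p q p' q' : ℝ}
    (hf : SClass f cf) (hg : SClass g cg) (lf : Landmarks f cf a' b') (lg : Landmarks g cg a b)
    (hfc : ∀ x ∈ Icc (0 : ℝ) 1, f x = cubic p' q' x)
    (hgc : ∀ x ∈ Icc (0 : ℝ) 1, g x = cubic p q x)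
    (hge : ∀ x ∈ Icc (0 : ℝ) 1, g x ≤ f x) :
    ∃ φ : ℝ → ℝ, Monotone φ ∧ (∀ x, φ x ∈ Icc (0 : ℝ) 1) ∧ φ b = b' ∧ φ a = a' ∧
      (∀ x < a, φ x < a') ∧
      (∀ x ∈ Icc (0 : ℝ) 1, x ≤ b ∨ a ≤ x → f (φ x) ≤ φ (g x)) ∧
      (∀ x ∈ Icc b a, φ (g x) ≤ f (φ x)) := by
  obtain ⟨haa, hratio⟩ := Landmarks.ratio_le hf hg lf lg hfc hgc hge
  have ha0 : 0 < a := hg.hc.1.trans lg.c_lt_a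
  have ha0' : 0 < a' := hf.hc.1.trans lf.c_lt_a
  have ha1 := lg.a_lt_one
  have ha1' := lf.a_lt_one
  have hb0 := lg.b_pos
  have hb0' := lf.b_pos
  have hba : b < a := lg.b_lt_c.trans lg.c_lt_a
  have hba' : b' < a' := lf.b_lt_c.trans lf.c_lt_a
  have hd : 0 < a - b := sub_pos.2 hba
  have hd' : 0 < a' - b' := sub_pos.2 hba'
  obtain ⟨r, hr⟩ : ∃ r, r = (a' - b') / (a - b) := ⟨_, rfl⟩
  have hr0 : 0 < r := by rw [hr]; positivity
  have hrd : r * (a - b) = a' - b' := by rw [hr]; field_simp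
  have hra : a' ≤ r * a := by
    rw [hr, div_mul_eq_mul_div, le_div_iff₀ hd]
    nlinarith
  have hr1 : 1 ≤ r := by
    by_contra! h
    nlinarith
  set T : ℝ → ℝ := fun x => a' + r * (x - a) with hT
  have hTmono : ∀ {x y}, x ≤ y → T x ≤ T y := fun {x y} h => by
    have := mul_le_mul_of_nonneg_left h hr0.le
    simp only [hT]; linarith
  have hTlt : ∀ {x y}, x < y → T x < T y := fun {x y} h => by
    have := mul_lt_mul_of_pos_left h hr0
    simp only [hT]; linarith
  have hTa : T a = a' := by simp [hT]
  have hTb : T b = b' := by simp only [hT]; linarith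
  have hT0 : T 0 ≤ 0 := by simp only [hT]; linarith
  have hT1 : 1 ≤ T 1 := by simp only [hT]; nlinarith
  -- the points sent to the endpoints of the domain of `f`
  obtain ⟨z₀, hz₀⟩ : ∃ z₀, T z₀ = 0 := ⟨a - a' / r, by simp only [hT]; field_simp; ring⟩
  obtain ⟨z₁, hz₁⟩ : ∃ z₁, T z₁ = 1 := ⟨a + (1 - a') / r, by simp only [hT]; field_simp; ring⟩
  have hz₀0 : 0 ≤ z₀ := by
    by_contra! h
    linarith [hTlt h]
  have hz₀a : z₀ < a := by
    by_contra! h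
    linarith [hTmono h]
  have hz₁1 : z₁ ≤ 1 := by
    by_contra! h
    linarith [hTlt h]
  have hz₁a : a < z₁ := by
    by_contra! h
    linarith [hTmono h]
  have hg0 : 0 ≤ T (g z₀) := by
    rw [← hz₀]
    apply hTmono
    rcases hz₀0.eq_or_lt with h | h
    · rw [← h, hg.f0]
    · exact (hg.lt_apply_s18 lg h hz₀a).le
  have hg1 : 0 ≤ T (g z₁) := by
    have hw : 0 < 1 - a := by linarith
    have hconc := hg.concave.2 (⟨ha0.le, ha1.le⟩ : a ∈ Icc (0 : ℝ) 1) (right_mem_Icc.2 zero_le_one)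
      (show 0 ≤ (1 - z₁) / (1 - a) from div_nonneg (by linarith) hw.le)
      (show 0 ≤ (z₁ - a) / (1 - a) from div_nonneg (by linarith) hw.le)
      (by field_simp; ring)
    have hcomb : (1 - z₁) / (1 - a) * a + (z₁ - a) / (1 - a) * 1 = z₁ := by field_simp; ring
    simp only [lg.fixed, hg.f1, smul_eq_mul, hcomb, mul_zero, add_zero] at hconc
    refine le_trans ?_ (hTmono hconc)
    simp only [hT] at hz₁ ⊢
    have h1 : a' + r * ((1 - z₁) / (1 - a) * a - a) = (a' - a) / (1 - a) := by
      field_simp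
      linear_combination -a * hz₁
    rw [h1]
    exact div_nonneg (by linarith) hw.le
  have hkey : ∀ x ∈ Icc (0 : ℝ) 1, T x ∈ Icc (0 : ℝ) 1 →
      ∃ l, 0 ≤ l ∧ T (g x) - f (T x) = (T x - a') * (T x - b') * l := by
    obtain ⟨e₀, e₁, e₂, e₃, he⟩ : ∃ e₀ e₁ e₂ e₃ : ℝ, ∀ x,
        T (cubic p q x) - cubic p' q' (T x) =
          e₀ + e₁ * T x + e₂ * T x ^ 2 + e₃ * T x ^ 3 := by
      have hx : ∀ x, x = (a - a' / r) + (1 / r) * T x := by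
        intro x; simp only [hT]; field_simp; ring
      obtain ⟨u, hu⟩ : ∃ u, u = a - a' / r := ⟨_, rfl⟩
      obtain ⟨v, hv⟩ : ∃ v, v = 1 / r := ⟨_, rfl⟩
      rw [← hu, ← hv] at hx
      refine ⟨a' - r * a + r * (q * u + (p - 2 * q) * u ^ 2 + (q - p) * u ^ 3),
        r * (q * v + 2 * (p - 2 * q) * u * v + 3 * (q - p) * u ^ 2 * v) - q',
        r * ((p - 2 * q) * v ^ 2 + 3 * (q - p) * u * v ^ 2) - (p' - 2 * q'),
        r * (q - p) * v ^ 3 - (q' - p'), fun x => ?_⟩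
      have h1 : T (cubic p q x) = a' + r * (cubic p q (u + v * T x) - a) := by rw [← hx]
      rw [h1]
      simp only [cubic]
      ring
    have he' : ∀ x ∈ Icc (0 : ℝ) 1, T x ∈ Icc (0 : ℝ) 1 → T (g x) - f (T x) =
        e₀ + e₁ * T x + e₂ * T x ^ 2 + e₃ * T x ^ 3 := by
      intro x hx hTx
      rw [hgc x hx, hfc _ hTx, he]
    have hEa := he' a ⟨ha0.le, ha1.le⟩ (by rw [hTa]; exact ⟨ha0'.le, ha1'.le⟩)
    have hEb := he' b ⟨hb0.le, by linarith⟩ (by rw [hTb]; exact ⟨hb0'.le, by linarith⟩)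
    have hE0 := he' z₀ ⟨hz₀0, by linarith⟩ (by rw [hz₀]; norm_num)
    have hE1 := he' z₁ ⟨by linarith, hz₁1⟩ (by rw [hz₁]; norm_num)
    simp only [lg.fixed, hTa, lf.fixed, sub_self] at hEa
    simp only [lg.preimage, hTa, hTb, lf.preimage, sub_self] at hEb
    simp only [hz₀, hf.f0] at hE0
    simp only [hz₁, hf.f1] at hE1
    intro x hx hTx
    rw [he' x hx hTx]
    exact cubic_eq_mul_linear hb0' hba' ha1' hEa.symm hEb.symm (by linarith) (by linarith) hTx
  have hproj : ∀ {s t}, s ≤ t → max 0 (min 1 s) ≤ max 0 (min (1 : ℝ) t) := fun h =>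
    max_le_max le_rfl (min_le_min le_rfl h)
  have hmem : ∀ {s : ℝ}, s ∈ Icc (0 : ℝ) 1 → max 0 (min 1 s) = s := fun {s} h => by
    rw [min_eq_right h.2, max_eq_right h.1]
  have hmaps : ∀ x, max 0 (min 1 (T x)) ∈ Icc (0 : ℝ) 1 := fun x =>
    ⟨le_max_left _ _, max_le zero_le_one (min_le_left _ _)⟩
  refine ⟨fun x => max 0 (min 1 (T x)), fun x y h => hproj (hTmono h), hmaps, ?_, ?_,
    fun x hx => ?_, fun x hx hx' => ?_, fun x hx => ?_⟩
  · simp only [hTb, hmem ⟨hb0'.le, hba'.le.trans ha1'.le⟩]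
  · simp only [hTa, hmem ⟨ha0'.le, ha1'.le⟩]
  · have h := hTlt hx
    rw [hTa] at h
    exact max_lt ha0' (min_lt_of_right_lt h)
  · rcases lt_or_ge (T x) 0 with h0 | h0
    · have : max 0 (min 1 (T x)) = 0 := max_eq_left ((min_le_right _ _).trans h0.le)
      simp only [this, hf.f0]
      exact (hmaps _).1
    rcases lt_or_ge 1 (T x) with h1 | h1
    · have : max 0 (min 1 (T x)) = 1 := by rw [min_eq_left h1.le, max_eq_right zero_le_one]
      simp only [this, hf.f1]
      exact (hmaps _).1
    obtain ⟨l, hl, hlx⟩ := hkey x hx ⟨h0, h1⟩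
    have hfle : f (T x) ≤ T (g x) := by
      have : 0 ≤ (T x - a') * (T x - b') := by
        rcases hx' with h | h
        · have := hTmono h
          rw [hTb] at this
          exact mul_nonneg_of_nonpos_of_nonpos (by linarith) (by linarith)
        · have := hTmono h
          rw [hTa] at this
          exact mul_nonneg (by linarith) (by linarith)
      have := mul_nonneg this hl
      linarith
    simp only [hmem ⟨h0, h1⟩]
    exact le_max_of_le_right (le_min (hf.maps ⟨h0, h1⟩).2 hfle)
  · have h0 := hTmono hx.1
    have h1 := hTmono hx.2
    rw [hTb] at h0
    rw [hTa] at h1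
    have hTx : T x ∈ Icc (0 : ℝ) 1 := ⟨by linarith, by linarith⟩
    obtain ⟨l, hl, hlx⟩ := hkey x ⟨by linarith [hx.1], by linarith [hx.2]⟩ hTx
    have : (T x - a') * (T x - b') ≤ 0 :=
      mul_nonpos_of_nonpos_of_nonneg (by linarith) (by linarith)
    have := mul_nonpos_of_nonpos_of_nonneg this hl
    simp only [hmem hTx]
    exact max_le (hf.maps hTx).1 ((min_le_right _ _).trans (by linarith))

theorem chi_eq_ite {f : ℝ → ℝ} {c a b x : ℝ} (hf : SClass f c) (h : Landmarks f c a b)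
    (hx : x ∈ Ioc (0 : ℝ) 1) (hxa : x ≠ a) (hfx : f x ∈ Ioc (0 : ℝ) 1) (hfxa : f x ≠ a) :
    chi f x = if (x < a ↔ f x < a) then 0 else 1 / 2 := by
  have key : ∀ t ∈ Ioc (0 : ℝ) 1, t ≠ a → (t < a ∧ 0 < f t - t) ∨ (a < t ∧ f t - t < 0) := by
    intro t ht hta
    rcases lt_or_gt_of_ne hta with h1 | h1
    · exact Or.inl ⟨h1, sub_pos.2 (hf.lt_apply_s18 h ht.1 h1)⟩
    · exact Or.inr ⟨h1, by linarith [hf.apply_lt_of_gt h h1 ht.2]⟩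
  unfold chi
  rcases key x hx hxa with ⟨h1, h2⟩ | ⟨h1, h2⟩ <;>
    rcases key (f x) hfx hfxa with ⟨h3, h4⟩ | ⟨h3, h4⟩
  · rw [if_neg (not_le.2 (mul_pos h2 h4)), if_pos (iff_of_true h1 h3)]
  · rw [if_pos (mul_nonpos_of_nonneg_of_nonpos h2.le h4.le),
      if_neg fun hi => h3.not_gt (hi.1 h1)]
  · rw [if_pos (mul_nonpos_of_nonpos_of_nonneg h2.le h4.le),
      if_neg fun hi => h1.not_gt (hi.2 h3)]
  · rw [if_neg (not_le.2 (mul_pos_of_neg_of_neg h2 h4)),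
      if_pos (iff_of_false h1.not_gt h3.not_gt)]

theorem overRotNum_eq_of_isPeriodicPt {f : ℝ → ℝ} {y : ℝ} {n : ℕ} (hn : 0 < n)
    (h : IsPeriodicPt f n y) :
    overRotNum f y = (∑ i ∈ Finset.range n, chi f (f^[i] y)) / n := by
  obtain ⟨k, hk⟩ := h.minimalPeriod_dvd
  have hsum : ∀ k : ℕ, ∑ i ∈ Finset.range (minimalPeriod f y * k), chi f (f^[i] y) =
      k * ∑ i ∈ Finset.range (minimalPeriod f y), chi f (f^[i] y) := by
    intro k
    induction k with
    | zero => simp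
    | succ k ih =>
      rw [Nat.mul_succ, Finset.sum_range_add, ih]
      have : ∀ i, f^[minimalPeriod f y * k + i] y = f^[i] y := fun i => by
        rw [add_comm, iterate_add_apply,
          ((isPeriodicPt_minimalPeriod f y).mul_const k : f^[minimalPeriod f y * k] y = y)]
      simp only [this]
      push_cast
      ring
  have hk0 : (k : ℝ) ≠ 0 := by
    rintro h0
    rw [Nat.cast_eq_zero.1 h0] at hk
    omega
  rw [overRotNum]
  conv_rhs => rw [hk, hsum]
  push_cast
  rw [mul_comm (minimalPeriod f y : ℝ), mul_div_mul_left _ _ hk0]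

theorem exists_apply_iterate_le {h : ℝ → ℝ} {x : ℝ} {n : ℕ} (hn : 0 < n)
    (hx : IsPeriodicPt h n x) : ∃ i, h (h^[i] x) ≤ h^[i] x := by
  by_contra! hlt
  have hmono : StrictMono fun i => h^[i] x := strictMono_nat_of_lt_succ fun i => by
    simpa only [iterate_succ_apply'] using hlt i
  have := hmono hn
  simp only [iterate_zero, id] at this
  rw [hx] at this
  exact lt_irrefl _ this

/-- The non-fixed points of period `n` of `g` in `[0, 1]`. -/
def cycles (g : ℝ → ℝ) (n : ℕ) : Set ℝ :=
  {x | x ∈ Icc (0 : ℝ) 1 ∧ IsPeriodicPt g n x ∧ g x ≠ x}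

section Cycles

variable {g : ℝ → ℝ} {c a b x : ℝ} {n : ℕ}

theorem apply_mem_cycles (hg : SClass g c) (hn : 0 < n) (hx : x ∈ cycles g n) :
    g x ∈ cycles g n := by
  obtain ⟨h1, h2, h3⟩ := hx
  refine ⟨hg.maps h1, h2.apply, fun h => h3 ?_⟩
  obtain ⟨m, rfl⟩ : ∃ m, n = m + 1 := ⟨n - 1, by omega⟩
  have h4 : g^[m] (g x) = g x := iterate_fixed h m
  rw [← iterate_succ_apply] at h4
  exact h4.symm.trans h2

theorem iterate_mem_cycles (hg : SClass g c) (hn : 0 < n) (hx : x ∈ cycles g n) (i : ℕ) :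
    g^[i] x ∈ cycles g n := by
  induction i with
  | zero => exact hx
  | succ i ih =>
    rw [iterate_succ_apply']
    exact apply_mem_cycles hg hn ih

theorem mem_Ioc_of_mem_cycles (hg : SClass g c) (hx : x ∈ cycles g n) : x ∈ Ioc (0 : ℝ) 1 :=
  ⟨lt_of_le_of_ne hx.1.1 fun h => hx.2.2 (by rw [← h, hg.f0]), hx.1.2⟩

theorem ne_fixed_of_mem_cycles (h : Landmarks g c a b) (hx : x ∈ cycles g n) : x ≠ a :=
  fun hxa => hx.2.2 (by rw [hxa, h.fixed])

/-- A point of a cycle moves within the left side, crosses to the right, or comes back. -/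
theorem cycles_trichotomy (hg : SClass g c) (h : Landmarks g c a b) (hn : 0 < n)
    (hx : x ∈ cycles g n) :
    (x ≤ b ∧ x < a ∧ g x < a) ∨ (b < x ∧ x < a ∧ a < g x) ∨ (a < x ∧ g x < a) := by
  have hba := h.b_lt_c.trans h.c_lt_a
  rcases lt_or_gt_of_ne (ne_fixed_of_mem_cycles h hx) with hxa | hxa
  · rcases le_or_gt x b with hxb | hxb
    · exact Or.inl ⟨hxb, hxa, lt_of_le_of_ne (hg.apply_le_of_le h hx.1.1 hxb)
        (ne_fixed_of_mem_cycles h (apply_mem_cycles hg hn hx))⟩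
    · exact Or.inr (Or.inl ⟨hxb, hxa, hg.lt_apply_of_mem_Ioo h hxb hxa⟩)
  · exact Or.inr (Or.inr ⟨hxa, hg.apply_lt_of_gt h hxa hx.1.2⟩)

end Cycles

/-- A cycle of `g` that visits `[0, b]` is shadowed by a cycle of `f` visiting the two sides of the
fixed point in the same order. -/
theorem exists_shadow {f g : ℝ → ℝ} {cf cg a b a' b' x₀ : ℝ} {n : ℕ} {φ : ℝ → ℝ}
    (hf : SClass f cf) (hg : SClass g cg) (lf : Landmarks f cf a' b') (lg : Landmarks g cg a b)
    (hcont : ContinuousOn f (Icc 0 1)) (hmono : Monotone φ) (hφ : ∀ x, φ x ∈ Icc (0 : ℝ) 1)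
    (hφb : φ b = b') (hφa : φ a = a')
    (hout : ∀ x ∈ Icc (0 : ℝ) 1, x ≤ b ∨ a ≤ x → f (φ x) ≤ φ (g x))
    (hin : ∀ x ∈ Icc b a, φ (g x) ≤ f (φ x))
    (hn : 0 < n) (hx₀ : x₀ ∈ cycles g n) (hleft : ∃ i, g^[i] x₀ ≤ b) :
    ∃ y ∈ Icc (0 : ℝ) 1, IsPeriodicPt f n y ∧ f y ≠ y ∧
      ∀ i, chi f (f^[i] y) = chi g (g^[i] x₀) := by
  classical
  have hb0' := lf.b_pos
  have hba' : b' < a' := lf.b_lt_c.trans lf.c_lt_a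
  have ha1' := lf.a_lt_one
  have hba : b < a := lg.b_lt_c.trans lg.c_lt_a
  set S : Set ℝ := {x | x ∈ cycles g n ∧ ∃ i, g^[i] x ≤ b} with hS
  have hmapS : ∀ x ∈ S, g x ∈ S := by
    rintro x ⟨hx, i, hi⟩
    refine ⟨apply_mem_cycles hg hn hx, i + (n - 1), ?_⟩
    rw [← iterate_succ_apply, show (i + (n - 1)).succ = i + n by omega, iterate_add_apply,
      show g^[n] x = x from hx.2.1]
    exact hi
  have htri : ∀ x ∈ S, (x ≤ b ∧ x < a ∧ g x < a) ∨ (b < x ∧ x < a ∧ a < g x) ∨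
      (a < x ∧ g x < a) := fun x hx => cycles_trichotomy hg lg hn hx.1
  set sg : ℝ → ℝ := fun x => if x < a then 1 else -1 with hsg
  set lo : ℝ → ℝ := fun x => if x ≤ b then 0 else if x < a then b' else -1 with hlo
  set hi : ℝ → ℝ := fun x => if x ≤ b then b' else if x < a then a' else -a' with hhi
  have hsgl : ∀ {x}, x < a → sg x = 1 := fun h => if_pos h
  have hsgr : ∀ {x}, a < x → sg x = -1 := fun h => if_neg h.not_gt
  have hL : ∀ {x}, x ≤ b → lo x = 0 ∧ hi x = b' := fun h => ⟨if_pos h, if_pos h⟩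
  have hM : ∀ {x}, b < x → x < a → lo x = b' ∧ hi x = a' := fun {x} h h' => by
    simp only [hlo, hhi, if_neg h.not_ge, if_pos h', and_self]
  have hR : ∀ {x}, a < x → lo x = -1 ∧ hi x = -a' := fun {x} h => by
    simp only [hlo, hhi, if_neg (hba.trans h).not_ge, if_neg h.not_gt, and_self]
  have hhile : ∀ {x}, x < a → hi x ≤ a' := fun {x} h => by
    rcases le_or_gt x b with h' | h'
    · rw [(hL h').2]; exact hba'.le
    · rw [(hM h' h).2]
  obtain ⟨w, hw, hwk⟩ := exists_eq_of_subsolution (ι := S) (fun x => ⟨g x, hmapS x x.2⟩)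
    (fun x => lo x) (fun x => hi x) (fun x t => sg (g x) * f (sg x * t))
    (by
      rintro ⟨x, hx⟩
      refine continuousOn_const.mul (hcont.comp (by fun_prop) fun t ht => ?_)
      simp only [mem_Icc] at ht ⊢
      rcases htri x hx with ⟨h1, h2, -⟩ | ⟨h1, h2, -⟩ | ⟨h1, -⟩
      · rw [(hL h1).1, (hL h1).2] at ht
        rw [hsgl h2]
        constructor <;> linarith
      · rw [(hM h1 h2).1, (hM h1 h2).2] at ht
        rw [hsgl h2]
        constructor <;> linarith
      · rw [(hR h1).1, (hR h1).2] at ht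
        rw [hsgr h1]
        constructor <;> linarith)
    (by
      rintro ⟨x, hx⟩
      show hi (g x) ≤ sg (g x) * f (sg x * hi x)
      rcases htri x hx with ⟨h1, h2, h3⟩ | ⟨h1, h2, h3⟩ | ⟨h1, h3⟩
      · rw [hsgl h3, hsgl h2, (hL h1).2, one_mul, one_mul, lf.preimage]
        exact hhile h3
      · rw [hsgr h3, hsgl h2, (hM h1 h2).2, (hR h3).2, one_mul, lf.fixed]
        linarith
      · rw [hsgl h3, hsgr h1, (hR h1).2, one_mul, neg_one_mul, neg_neg, lf.fixed]
        exact hhile h3)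
    (fun x => sg x * φ x)
    (by
      rintro ⟨x, hx⟩
      simp only [mem_Icc]
      rcases htri x hx with ⟨h1, h2, -⟩ | ⟨h1, h2, -⟩ | ⟨h1, -⟩
      · rw [(hL h1).1, (hL h1).2, hsgl h2, one_mul, ← hφb]
        exact ⟨(hφ x).1, hmono h1⟩
      · rw [(hM h1 h2).1, (hM h1 h2).2, hsgl h2, one_mul, ← hφb, ← hφa]
        exact ⟨hmono h1.le, hmono h2.le⟩
      · rw [(hR h1).1, (hR h1).2, hsgr h1, neg_one_mul, ← hφa]
        exact ⟨neg_le_neg (hφ x).2, neg_le_neg (hmono h1.le)⟩)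
    (by
      rintro ⟨x, hx⟩
      show sg (g x) * f (sg x * (sg x * φ x)) ≤ sg (g x) * φ (g x)
      rcases htri x hx with ⟨h1, h2, h3⟩ | ⟨h1, h2, h3⟩ | ⟨h1, h3⟩
      · simp only [hsgl h3, hsgl h2, one_mul]
        exact hout x hx.1.1 (Or.inl h1)
      · simp only [hsgr h3, hsgl h2, one_mul, neg_one_mul]
        exact neg_le_neg (hin x ⟨h1.le, h2.le⟩)
      · simp only [hsgl h3, hsgr h1, one_mul, neg_one_mul, neg_neg]
        exact hout x hx.1.1 (Or.inr h1.le))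
  set Y : S → ℝ := fun x => sg x * w x with hY
  have hsq : ∀ x, sg x * sg x = 1 := fun x => by
    simp only [hsg]; split_ifs <;> norm_num
  have hfY : ∀ x : S, f (Y x) = Y ⟨g x, hmapS x x.2⟩ := fun x => by
    have h1 := hwk x
    simp only [hY]
    rw [← h1, ← mul_assoc, hsq, one_mul]
  have hYL : ∀ x : S, (x : ℝ) ≤ b → Y x ∈ Icc 0 b' := fun x h => by
    have h1 := hw x
    simp only [(hL h).1, (hL h).2] at h1
    simpa only [hY, hsgl (h.trans_lt hba), one_mul] using h1
  have hYM : ∀ x : S, b < (x : ℝ) → (x : ℝ) < a → Y x ∈ Icc b' a' := fun x h h' => by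
    have h1 := hw x
    simp only [(hM h h').1, (hM h h').2] at h1
    simpa only [hY, hsgl h', one_mul] using h1
  have hYR : ∀ x : S, a < (x : ℝ) → Y x ∈ Icc a' 1 := fun x h => by
    have h1 := hw x
    simp only [(hR h).1, (hR h).2, mem_Icc] at h1
    simp only [hY, hsgr h, neg_one_mul]
    exact ⟨by linarith, by linarith⟩
  have hiterS : ∀ (i : ℕ) (x : S), g^[i] x ∈ S := by
    intro i x
    induction i with
    | zero => exact x.2
    | succ i ih => rw [iterate_succ_apply']; exact hmapS _ ih
  have hiter : ∀ (i : ℕ) (x : S), f^[i] (Y x) = Y ⟨g^[i] x, hiterS i x⟩ := by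
    intro i x
    induction i with
    | zero => rfl
    | succ i ih =>
      rw [iterate_succ_apply', ih, hfY]
      congr 2
      rw [iterate_succ_apply']
  have hYa : ∀ x : S, Y x ≠ a' := by
    intro x hx
    obtain ⟨i, hxi⟩ := x.2.2
    have h1 := hiter i x
    rw [hx, iterate_fixed lf.fixed] at h1
    have h2 := (hYL ⟨_, hiterS i x⟩ hxi).2
    linarith
  have hYlt : ∀ x : S, Y x < a' ↔ (x : ℝ) < a := by
    intro x
    rcases htri x x.2 with ⟨h1, h2, -⟩ | ⟨h1, h2, -⟩ | ⟨h1, -⟩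
    · exact iff_of_true ((hYL x h1).2.trans_lt hba') h2
    · exact iff_of_true (lt_of_le_of_ne (hYM x h1 h2).2 (hYa x)) h2
    · exact iff_of_false (hYR x h1).1.not_gt h1.not_gt
  have hYmem : ∀ x : S, Y x ∈ Ioc (0 : ℝ) 1 := by
    intro x
    have hI : Y x ∈ Icc (0 : ℝ) 1 := by
      rcases htri x x.2 with ⟨h1, h2, -⟩ | ⟨h1, h2, -⟩ | ⟨h1, -⟩
      · exact ⟨(hYL x h1).1, by linarith [(hYL x h1).2]⟩
      · exact ⟨by linarith [(hYM x h1 h2).1], by linarith [(hYM x h1 h2).2]⟩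
      · exact ⟨by linarith [(hYR x h1).1], (hYR x h1).2⟩
    refine ⟨lt_of_le_of_ne hI.1 fun h0 => ?_, hI.2⟩
    obtain ⟨i, hxi⟩ := exists_apply_iterate_le hn x.2.1.2.1
    have hmem := hiterS i x
    have hright : a < g^[i] (x : ℝ) := by
      by_contra! hle
      have h1 := hg.lt_apply_s18 lg (mem_Ioc_of_mem_cycles hg hmem.1).1
        (lt_of_le_of_ne hle (ne_fixed_of_mem_cycles lg hmem.1))
      linarith
    have h1 := hiter i x
    rw [← h0, iterate_fixed hf.f0] at h1
    have h2 := (hYR ⟨_, hmem⟩ hright).1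
    linarith
  have hchi : ∀ x : S, chi f (Y x) = chi g x := by
    intro x
    have hgx := hmapS x x.2
    rw [chi_eq_ite hf lf (hYmem x) (hYa x) (by rw [hfY]; exact hYmem _) (by rw [hfY]; exact hYa _),
      chi_eq_ite hg lg (mem_Ioc_of_mem_cycles hg x.2.1) (ne_fixed_of_mem_cycles lg x.2.1)
      (mem_Ioc_of_mem_cycles hg hgx.1) (ne_fixed_of_mem_cycles lg hgx.1), hfY]
    simp only [hYlt]
  have hx₀S : x₀ ∈ S := ⟨hx₀, hleft⟩
  refine ⟨Y ⟨x₀, hx₀S⟩, Ioc_subset_Icc_self (hYmem _), ?_, fun h => ?_, fun i => ?_⟩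
  · show f^[n] _ = _
    rw [hiter]
    congr 2
    exact hx₀.2.1
  · have hpos := hYmem ⟨x₀, hx₀S⟩
    rcases lt_or_gt_of_ne (hYa ⟨x₀, hx₀S⟩) with h1 | h1
    · linarith [hf.lt_apply_s18 lf hpos.1 h1]
    · linarith [hf.apply_lt_of_gt lf h1 hpos.2]
  · rw [hiter, hchi]

/-- A cycle of `g` that avoids `[0, b]` forces a cycle of `f` of period two. -/
theorem exists_two_cycle {f g : ℝ → ℝ} {cf cg a b a' b' x₀ : ℝ} {n : ℕ} {φ : ℝ → ℝ}
    (hf : SClass f cf) (hg : SClass g cg) (lf : Landmarks f cf a' b') (lg : Landmarks g cg a b)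
    (hcont : ContinuousOn f (Icc 0 1)) (hmono : Monotone φ) (hφ : ∀ x, φ x ∈ Icc (0 : ℝ) 1)
    (hφb : φ b = b') (hφa : φ a = a') (hφlt : ∀ x < a, φ x < a')
    (hout : ∀ x ∈ Icc (0 : ℝ) 1, x ≤ b ∨ a ≤ x → f (φ x) ≤ φ (g x))
    (hin : ∀ x ∈ Icc b a, φ (g x) ≤ f (φ x))
    (hn : 0 < n) (hx₀ : x₀ ∈ cycles g n) (hright : ∀ i, b < g^[i] x₀) :
    ∃ z ∈ Ioo b' a', f (f z) = z := by
  have hba' : b' < a' := lf.b_lt_c.trans lf.c_lt_a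
  have ha1' := lf.a_lt_one
  have hca' := lf.c_lt_a
  obtain ⟨x, hx, hxb, hxa⟩ : ∃ x ∈ cycles g n, (∀ i, b < g^[i] x) ∧ x < a := by
    rcases cycles_trichotomy hg lg hn hx₀ with ⟨-, h, -⟩ | ⟨-, h, -⟩ | ⟨-, h⟩
    · exact ⟨x₀, hx₀, hright, h⟩
    · exact ⟨x₀, hx₀, hright, h⟩
    · exact ⟨g x₀, apply_mem_cycles hg hn hx₀, fun i => hright (i + 1), h⟩
  have hstep : ∀ i, g^[i] x < a → a < g (g^[i] x) ∧ g (g (g^[i] x)) < a := by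
    intro i h
    have hm := iterate_mem_cycles hg hn hx i
    have h1 : a < g (g^[i] x) := hg.lt_apply_of_mem_Ioo lg (hxb i) h
    exact ⟨h1, hg.apply_lt_of_gt lg h1 (apply_mem_cycles hg hn hm).1.2⟩
  have hleft : ∀ i, g^[2 * i] x < a := by
    intro i
    induction i with
    | zero => exact hxa
    | succ i ih =>
      rw [show 2 * (i + 1) = 2 * i + 1 + 1 by ring, iterate_succ_apply', iterate_succ_apply']
      exact (hstep _ ih).2
  have hper : IsPeriodicPt g^[2] n x := by
    show (g^[2])^[n] x = x
    rw [← iterate_mul, mul_comm]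
    exact hx.2.1.mul_const 2
  obtain ⟨i, hi⟩ := exists_apply_iterate_le hn hper
  rw [← iterate_mul] at hi
  obtain ⟨u, hu⟩ : ∃ u, u = g^[2 * i] x := ⟨_, rfl⟩
  have hua : u < a := hu ▸ hleft i
  have hub : b < u := hu ▸ hxb _
  have hgu : a < g u := hu ▸ (hstep _ (hleft i)).1
  have hgu1 : g u ≤ 1 := hu ▸ (apply_mem_cycles hg hn (iterate_mem_cycles hg hn hx _)).1.2
  rw [← hu] at hi
  have hb'u : b' ≤ φ u := hφb ▸ hmono hub.le
  have hua' := hφlt u hua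
  have hend : f (f (φ u)) ≤ φ u := by
    have h1 := hin u ⟨hub.le, hua.le⟩
    have h2 : a' ≤ φ (g u) := hφa ▸ hmono hgu.le
    have h3 := hf.anti.antitoneOn ⟨by linarith, (hφ _).2⟩
      ⟨by linarith, (hf.maps (hφ u)).2⟩ h1
    have h4 := hout (g u) ⟨by linarith [lg.b_pos], hgu1⟩ (Or.inr hgu.le)
    exact h3.trans (h4.trans (hmono hi))
  have hsub : Icc b' (φ u) ⊆ Icc 0 1 := Icc_subset_Icc lf.b_pos.le (hφ u).2
  have hcon : ContinuousOn (fun t => f (f t) - t) (Icc b' (φ u)) :=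
    ((hcont.comp hcont hf.maps).mono hsub).sub continuousOn_id
  obtain ⟨z, hz, hfz⟩ := intermediate_value_Icc' hb'u hcon
    (show (0 : ℝ) ∈ Icc _ _ from ⟨by linarith, by rw [lf.preimage, lf.fixed]; linarith⟩)
  have hfz' : f (f z) = z := by linarith
  refine ⟨z, ⟨lt_of_le_of_ne hz.1 fun h => ?_, hz.2.trans_lt hua'⟩, hfz'⟩
  rw [← h, lf.preimage, lf.fixed] at hfz'
  linarith

theorem stmt18 (f g : ℝ → ℝ) (cf cg : ℝ) (hf : GClass f cf) (hg : GClass g cg)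
    (hge : ∀ x ∈ Set.Icc (0:ℝ) 1, g x ≤ f x) :
    overRotInterval g (Set.Icc 0 1) ⊆ overRotInterval f (Set.Icc 0 1) := by
  obtain ⟨p', q', hfc⟩ := hf.exists_cubic
  obtain ⟨p, q, hgc⟩ := hg.exists_cubic
  have hcont := hf.continuousOn
  obtain ⟨a', b', lf⟩ := hf.1.exists_landmarks hcont
  obtain ⟨a, b, lg⟩ := hg.1.exists_landmarks hg.continuousOn
  obtain ⟨φ, hmono, hφ, hφb, hφa, hφlt, hout, hin⟩ :=
    exists_comparison hf.1 hg.1 lf lg hfc hgc hge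
  refine closure_mono ?_
  rintro r ⟨x, hx, hper, hne, hr⟩
  have hn := minimalPeriod_pos_of_mem_periodicPts hper
  have hcyc : x ∈ cycles g (minimalPeriod g x) := ⟨hx, isPeriodicPt_minimalPeriod g x, hne⟩
  by_cases hleft : ∃ i, g^[i] x ≤ b
  · obtain ⟨y, hy, hyper, hyne, hchi⟩ :=
      exists_shadow hf.1 hg.1 lf lg hcont hmono hφ hφb hφa hout hin hn hcyc hleft
    refine ⟨y, hy, ⟨_, hn, hyper⟩, hyne, ?_⟩
    rw [overRotNum_eq_of_isPeriodicPt hn hyper, ← hr, overRotNum]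
    simp only [hchi]
  · push Not at hleft
    obtain ⟨z, hz, hfz⟩ :=
      exists_two_cycle hf.1 hg.1 lf lg hcont hmono hφ hφb hφa hφlt hout hin hn hcyc hleft
    have hz0 : 0 < z := lf.b_pos.trans hz.1
    have ha1' := lf.a_lt_one
    have hz1 : z ≤ 1 := by linarith [hz.2]
    have hfza : a' < f z := hf.1.lt_apply_of_mem_Ioo lf hz.1 hz.2
    have hfz1 : f z ≤ 1 := (hf.1.maps ⟨hz0.le, hz1⟩).2
    have hfmem : f z ∈ Ioc (0 : ℝ) 1 := ⟨by linarith [hz.2], hfz1⟩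
    have hzper : IsPeriodicPt f 2 z := hfz
    have hchi0 : chi f z = 1 / 2 := by
      rw [chi_eq_ite hf.1 lf ⟨hz0, hz1⟩ hz.2.ne hfmem hfza.ne',
        if_neg fun h => hfza.not_gt (h.1 hz.2)]
    have hchi1 : chi f (f z) = 1 / 2 := by
      rw [chi_eq_ite hf.1 lf hfmem hfza.ne' (by rw [hfz]; exact ⟨hz0, hz1⟩)
        (by rw [hfz]; exact hz.2.ne), hfz, if_neg fun h => hfza.not_gt (h.2 hz.2)]
    have hchig : ∀ i, chi g (g^[i] x) = 1 / 2 := by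
      intro i
      have hm := iterate_mem_cycles hg.1 hn hcyc i
      have hm' := apply_mem_cycles hg.1 hn hm
      rw [chi_eq_ite hg.1 lg (mem_Ioc_of_mem_cycles hg.1 hm) (ne_fixed_of_mem_cycles lg hm)
        (mem_Ioc_of_mem_cycles hg.1 hm') (ne_fixed_of_mem_cycles lg hm')]
      rcases cycles_trichotomy hg.1 lg hn hm with ⟨h, -⟩ | ⟨-, h1, h2⟩ | ⟨h1, h2⟩
      · exact absurd (hleft i) h.not_gt
      · exact if_neg fun h => h2.not_gt (h.1 h1)
      · exact if_neg fun h => h1.not_gt (h.2 h2)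
    refine ⟨z, ⟨hz0.le, hz1⟩, ⟨2, two_pos, hzper⟩, fun h => by linarith [hz.2], ?_⟩
    have hn' : (minimalPeriod g x : ℝ) ≠ 0 := Nat.cast_ne_zero.2 hn.ne'
    have hsum : ∑ i ∈ Finset.range 2, chi f (f^[i] z) = 1 := by
      rw [Finset.sum_range_succ, Finset.sum_range_one]
      simp only [iterate_zero, id, iterate_one, hchi0, hchi1]
      norm_num
    rw [overRotNum_eq_of_isPeriodicPt two_pos hzper, hsum, ← hr, overRotNum]
    simp only [hchig, Finset.sum_const, Finset.card_range, nsmul_eq_mul]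
    field_simp
    norm_num
end
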